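/- arXiv:1902.10564 — 2 statements merged into one kernel-verified Lean document; each statement's English description precedes it below -/
import Mathlib

section
/- Let K be a Cantor set in ℝ and let G be a finitely generated subgroup of diff^{1+Lip}(K). Then at least one of the following holds: (1) some element g of G has a hyperbolic fixed point in K; (2) every minimal invariant set for the action of G on K is a finite subset of K. -/
open Set

/-- `K` is a Cantor set in `ℝ`: nonempty, compact, totally disconnected, perfect. -/
def IsCantorInR (K : Set ℝ) : Prop :=
  K.Nonempty ∧ IsCompact K ∧ IsTotallyDisconnected K ∧ Perfect K

open Classical in
/-- Apply a permutation of `K` to a real number (identity outside `K`). -/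
noncomputable def apK (K : Set ℝ) (f : Equiv.Perm K) (y : ℝ) : ℝ :=
  if h : y ∈ K then (f ⟨y, h⟩ : ℝ) else y

/-- `f` locally coincides with a `C¹` embedding of an open interval with
nowhere-vanishing derivative. -/
def IsD1 (K : Set ℝ) (f : Equiv.Perm K) : Prop :=
  ∀ x : K, ∃ a b : ℝ, (x : ℝ) ∈ Set.Ioo a b ∧
    ∃ F F' : ℝ → ℝ,
      (∀ y ∈ Set.Ioo a b, HasDerivAt F (F' y) y ∧ F' y ≠ 0) ∧
      ContinuousOn F' (Set.Ioo a b) ∧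
      Set.InjOn F (Set.Ioo a b) ∧
      (∀ y : ℝ, y ∈ Set.Ioo a b → y ∈ K → F y = apK K f y)

/-- `f` locally coincides with a `C¹` embedding of an open interval with
nowhere-vanishing derivative whose log-derivative is Lipschitz. -/
def IsD1Lip (K : Set ℝ) (f : Equiv.Perm K) : Prop :=
  ∀ x : K, ∃ a b : ℝ, (x : ℝ) ∈ Set.Ioo a b ∧
    ∃ F F' : ℝ → ℝ,
      (∀ y ∈ Set.Ioo a b, HasDerivAt F (F' y) y ∧ F' y ≠ 0) ∧
      ContinuousOn F' (Set.Ioo a b) ∧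
      Set.InjOn F (Set.Ioo a b) ∧
      (∃ C : NNReal, LipschitzOnWith C (fun y => Real.log |F' y|) (Set.Ioo a b)) ∧
      (∀ y : ℝ, y ∈ Set.Ioo a b → y ∈ K → F y = apK K f y)

/-- membership in `diff¹(K)`: a homeomorphism of `K` locally coinciding
with `C¹` diffeomorphisms of intervals of `ℝ`. -/
def MemDiff1 (K : Set ℝ) (f : Equiv.Perm K) : Prop :=
  Continuous (fun x : K => f x) ∧ Continuous (fun x : K => f.symm x) ∧ IsD1 K f

/-- membership in `diff^{1+Lip}(K)`. -/
def MemDiffLip (K : Set ℝ) (f : Equiv.Perm K) : Prop :=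
  Continuous (fun x : K => f x) ∧ Continuous (fun x : K => f.symm x) ∧ IsD1Lip K f

/-- The derivative of `f` at `x`, as a limit of difference quotients within `K`. -/
def HasDerivOnK (K : Set ℝ) (f : Equiv.Perm K) (x d : ℝ) : Prop :=
  Filter.Tendsto (fun y : ℝ => (apK K f y - apK K f x) / (y - x))
    (nhdsWithin x (K \ {x})) (nhds d)

/-- `f` is increasing on the interval `I`: it coincides on `I ∩ K` with an
increasing `C¹` diffeomorphism of `I` onto an interval of `ℝ`. -/
def IncreasingOnK (K : Set ℝ) (f : Equiv.Perm K) (I : Set ℝ) : Prop :=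
  ∃ F F' : ℝ → ℝ,
    StrictMonoOn F I ∧
    (∀ y ∈ I, HasDerivWithinAt F (F' y) I y ∧ 0 < F' y) ∧
    ContinuousOn F' I ∧
    (∀ y ∈ I, y ∈ K → F y = apK K f y)

/-- `A` is invariant under the subgroup `G`. -/
def IsInvariantSet (K : Set ℝ) (G : Subgroup (Equiv.Perm K)) (A : Set ℝ) : Prop :=
  ∀ g ∈ G, ∀ x ∈ A, apK K g x ∈ A

/-- `A` is a minimal invariant set for the action of `G` on `K`. -/
def IsMinimalInvariantSet (K : Set ℝ) (G : Subgroup (Equiv.Perm K)) (A : Set ℝ) : Prop :=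
  A.Nonempty ∧ A ⊆ K ∧ IsClosed A ∧ IsInvariantSet K G A ∧
    ∀ B : Set ℝ, B.Nonempty → B ⊆ A → IsClosed B → IsInvariantSet K G B → B = A

/-- The set of points of `K` fixed by every element of `H`. -/
def fixedSet (K : Set ℝ) (H : Subgroup (Equiv.Perm K)) : Set ℝ :=
  {x | x ∈ K ∧ ∀ g ∈ H, apK K g x = x}

/-- `a, b` generate a free subsemigroup: distinct nonempty positive words in
`a` and `b` define distinct elements. -/
def IsFreePair {M : Type*} [Monoid M] (a b : M) : Prop :=
  ∀ w₁ w₂ : List Bool, w₁ ≠ [] → w₂ ≠ [] →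
    (w₁.map (fun t => if t then a else b)).prod = (w₂.map (fun t => if t then a else b)).prod →
    w₁ = w₂

/-- `G` contains no free subsemigroup on two generators. -/
def HasNoFreeSubsemigroup {Γ : Type*} [Group Γ] (G : Subgroup Γ) : Prop :=
  ¬ ∃ a ∈ G, ∃ b ∈ G, IsFreePair a b

/-- `p` is accumulated on the left by `A`. -/
def AccLeft (p : ℝ) (A : Set ℝ) : Prop := ∀ α > 0, (Set.Ico (p - α) p ∩ A).Nonempty

/-- `p` is accumulated on the right by `A`. -/
def AccRight (p : ℝ) (A : Set ℝ) : Prop := ∀ α > 0, (Set.Ioc p (p + α) ∩ A).Nonempty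

/-!
Let `A` be an infinite compact minimal set. The generators map short gaps of `A` to gaps. The
Schreier graph of the orbit of an endpoint is infinite and connected, and only finitely many
endpoints do not bound a short gap; removing them leaves an infinite component. Along a simple path
in that component every gap occurs at most twice, so the total length of the gaps met is at most
`2 * diam A`. As the derivatives of the generators have Lipschitz logarithms, this bounds the
distortion of the composition along the path by a constant independent of the path, on a ball whose
radius depends only on the first gap. The gaps reached become arbitrarily short, so
these compositions contract a fixed ball around a point `u` arbitrarily strongly, with images
accumulating at some point. By minimality the images also accumulate at `u` itself, and the
contraction principle yields a fixed point with derivative of absolute value less than `1`.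
-/

open Filter Topology Pointwise MulAction Metric
open scoped NNReal

/-! ### Gaps and endpoints -/

theorem orderTopology_of_compactSpace {X : Type*} [LinearOrder X] [t : TopologicalSpace X]
    [OrderClosedTopology X] [CompactSpace X] : OrderTopology X := by
  have hle : t ≤ Preorder.topology X := le_generateFrom <| by
    rintro _ ⟨a, rfl | rfl⟩
    exacts [isOpen_Ioi, isOpen_Iio]
  have hT2 : @T2Space X (Preorder.topology X) :=
    let _ := Preorder.topology X
    have : OrderTopology X := ⟨rfl⟩
    inferInstance
  have hid := @Continuous.isClosedMap X X t (Preorder.topology X) _ hT2 id (continuous_id_of_le hle)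
  refine ⟨hle.antisymm fun U hU ↦ ?_⟩
  simpa only [image_id, isClosed_compl_iff] using hid _ hU.isClosed_compl

section Gap

variable {X : Type*} [LinearOrder X]

/-- One of `x` and `y` covers the other. In a closed set of reals this says that they bound a
common complementary interval; the order of the two ends is not recorded because the maps of
interest may reverse it. -/
def IsGap (x y : X) : Prop := x ⋖ y ∨ y ⋖ x

theorem IsGap.ne {x y : X} (h : IsGap x y) : x ≠ y :=
  h.elim CovBy.ne CovBy.ne'

theorem isGap_iff_uIoo {x y : X} : IsGap x y ↔ x ≠ y ∧ uIoo x y = ∅ := by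
  rcases lt_trichotomy x y with h | rfl | h
  · simp [IsGap, covBy_iff_Ioo_eq, h, h.not_gt, h.ne, uIoo_of_lt]
  · simp [IsGap]
  · simp [IsGap, covBy_iff_Ioo_eq, h, h.not_gt, h.ne', uIoo_of_gt]

theorem IsGap.unique [TopologicalSpace X] [OrderTopology X] [PerfectSpace X] {x y z : X}
    (hy : IsGap x y) (hz : IsGap x z) : y = z := by
  have not_both {a b : X} (ha : a ⋖ x) (hb : x ⋖ b) : False := by
    have hx : 𝓝[≠] x = ⊥ := by
      rw [← nhdsLT_sup_nhdsGT, ha.nhdsLT, hb.nhdsGT, sup_bot_eq]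
    exact (PerfectSpace.not_isolated x).ne hx
  rcases hy with hy | hy <;> rcases hz with hz | hz
  · exact hy.unique_right hz
  · exact (not_both hz hy).elim
  · exact (not_both hy hz).elim
  · exact hy.unique_left hz

/-- `x` is isolated on at least one side. For a compact set of reals these are the ends of the
complementary intervals; one-sided neighbourhoods make the notion visibly local. -/
def IsEndpoint [TopologicalSpace X] (x : X) : Prop := 𝓝[>] x = ⊥ ∨ 𝓝[<] x = ⊥

theorem isEndpoint_iff [TopologicalSpace X] [OrderTopology X] {x : X} :
    IsEndpoint x ↔ IsTop x ∨ IsBot x ∨ ∃ y, IsGap x y := by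
  simp only [IsEndpoint, IsGap, nhdsGT_eq_bot_iff, nhdsLT_eq_bot_iff, exists_or]
  tauto

theorem sum_dist_le_of_covBy {f : X → ℝ} (hf : Monotone f) {m M : ℝ} (hmM : m ≤ M)
    {T : Finset X} {Y : X → X} (hm : ∀ x ∈ T, m ≤ f x) (hM : ∀ x ∈ T, f (Y x) ≤ M)
    (hY : ∀ x ∈ T, x ⋖ Y x) : ∑ x ∈ T, dist (f x) (f (Y x)) ≤ M - m := by
  induction T using Finset.induction_on_max generalizing M with
  | empty => simpa using hmM
  | insert a T hlt ih =>
    simp only [Finset.forall_mem_insert] at hm hM hY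
    have hsum := ih hm.1 hm.2 (fun x hx ↦ hf ((hY.2 x hx).ge_of_gt (hlt x hx))) hY.2
    rw [Finset.sum_insert fun ha ↦ (hlt a ha).false, dist_comm, Real.dist_eq,
      abs_of_nonneg (sub_nonneg.2 (hf hY.1.le))]
    linarith

theorem sum_dist_le_of_isGap {A : Set ℝ} (hA : Bornology.IsBounded A) {T : Finset A} {Y : A → A}
    (hY : ∀ x ∈ T, IsGap x (Y x)) : ∑ x ∈ T, dist x (Y x) ≤ 2 * Metric.diam A := by
  classical
  have hdiam := Real.diam_eq hA
  have hle : sInf A ≤ sSup A := sub_nonneg.1 (hdiam ▸ Metric.diam_nonneg)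
  have hinf (x : A) : sInf A ≤ x := csInf_le hA.bddBelow x.2
  have hsup (x : A) : (x : ℝ) ≤ sSup A := le_csSup hA.bddAbove x.2
  have hright : ∑ x ∈ T with x ⋖ Y x, dist x (Y x) ≤ sSup A - sInf A :=
    sum_dist_le_of_covBy (Subtype.mono_coe _) hle (fun x _ ↦ hinf x) (fun x _ ↦ hsup (Y x))
      fun x hx ↦ (Finset.mem_filter.1 hx).2
  have hleft : ∑ x ∈ T with ¬x ⋖ Y x, dist x (Y x) ≤ -sInf A - -sSup A := by
    have hneg : Monotone fun x : Aᵒᵈ ↦ -((OrderDual.ofDual x : A) : ℝ) := fun x y h ↦ neg_le_neg h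
    calc ∑ x ∈ T with ¬x ⋖ Y x, dist x (Y x)
      _ = ∑ x ∈ T with ¬x ⋖ Y x, dist (-(x : ℝ)) (-(Y x : ℝ)) :=
        Finset.sum_congr rfl fun x _ ↦ (dist_neg_neg (x : ℝ) (Y x)).symm
      _ ≤ -sInf A - -sSup A := sum_dist_le_of_covBy hneg (neg_le_neg hle)
        (fun x _ ↦ neg_le_neg (hsup x)) (fun x _ ↦ neg_le_neg (hinf (Y x)))
        fun x hx ↦ have hx := Finset.mem_filter.1 hx; ((hY x hx.1).resolve_left hx.2).toDual
  rw [← Finset.sum_filter_add_sum_filter_not T fun x ↦ x ⋖ Y x]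
  linarith

theorem finite_setOf_isGap_dist_ge {A : Set ℝ} (hA : Bornology.IsBounded A) {δ : ℝ} (hδ : 0 < δ) :
    {x : A | ∃ y, IsGap x y ∧ δ ≤ dist x y}.Finite := by
  by_contra hinf
  obtain ⟨n, hn⟩ := exists_nat_gt (2 * Metric.diam A / δ)
  obtain ⟨T, hT, hcard⟩ := Set.Infinite.exists_subset_card_eq hinf n
  choose! Y hY using fun x (hx : x ∈ {x : A | ∃ y, IsGap x y ∧ δ ≤ dist x y}) ↦ hx
  have hsum := sum_dist_le_of_isGap hA fun x hx ↦ (hY x (hT hx)).1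
  have hcount := Finset.card_nsmul_le_sum T _ δ fun x hx ↦ (hY x (hT hx)).2
  rw [div_lt_iff₀ hδ] at hn
  rw [hcard, nsmul_eq_mul] at hcount
  linarith

theorem finite_isEndpoint_of_isGap_dist_ge {A : Set ℝ} [CompactSpace A] {δ : ℝ} (hδ : 0 < δ) :
    {x : A | IsEndpoint x ∧ ∀ y, IsGap x y → δ ≤ dist x y}.Finite := by
  have : OrderTopology A := orderTopology_of_compactSpace
  have hA : Bornology.IsBounded A := (isCompact_iff_compactSpace.2 ‹_›).isBounded
  refine ((finite_setOf_isGap_dist_ge hA hδ).union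
    ((subsingleton_isTop A).finite.union (subsingleton_isBot A).finite)).subset ?_
  rintro x ⟨hx, hlong⟩
  obtain hx | hx | ⟨y, hy⟩ := isEndpoint_iff.1 hx
  exacts [.inr (.inl hx), .inr (.inr hx), .inl ⟨y, hy, hlong y hy⟩]

theorem exists_isEndpoint {A : Set ℝ} [CompactSpace A] [Nonempty A] : ∃ x : A, IsEndpoint x := by
  have : OrderTopology A := orderTopology_of_compactSpace
  obtain ⟨x, -, hx⟩ := isCompact_univ.exists_isLeast (univ_nonempty (α := A))
  exact ⟨x, isEndpoint_iff.2 (.inr (.inl fun y ↦ hx (mem_univ y)))⟩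

variable {Y : Type*} [LinearOrder Y] {f : X → Y}

theorem IsGap.of_apply {x y : X} (hf : StrictMonoOn f (uIcc x y) ∨ StrictAntiOn f (uIcc x y))
    (h : IsGap (f x) (f y)) : IsGap x y := by
  wlog hxy : x ≤ y generalizing x y
  · rw [uIcc_comm] at hf
    exact (this hf h.symm (not_le.1 hxy).le).symm
  rw [isGap_iff_uIoo] at h ⊢
  rw [uIcc_of_le hxy] at hf
  have hmaps : MapsTo f (Ioo x y) (uIoo (f x) (f y)) := hf.elim
    (fun hf ↦ hf.mapsTo_Ioo.mono_right Ioo_subset_uIoo)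
    fun hf ↦ hf.mapsTo_Ioo.mono_right Ioo_subset_uIoo'
  refine ⟨ne_of_apply_ne f h.1, ?_⟩
  rw [h.2] at hmaps
  rw [uIoo_of_le hxy]
  exact subset_empty_iff.1 hmaps

variable [TopologicalSpace X] [TopologicalSpace Y]

theorem IsEndpoint.of_apply {x : X} {U : Set X} (hU : U ∈ 𝓝 x) (hc : ContinuousAt f x)
    (hf : StrictMonoOn f U ∨ StrictAntiOn f U) (h : IsEndpoint (f x)) : IsEndpoint x := by
  have eq_bot {s : Set X} {t : Set Y} (hst : MapsTo f (U ∩ s) t) (ht : 𝓝[t] (f x) = ⊥) :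
      𝓝[s] x = ⊥ := by
    have hmap := (hc.continuousWithinAt (s := U ∩ s)).tendsto_nhdsWithin hst
    rwa [ht, Tendsto, le_bot_iff, map_eq_bot_iff,
      nhdsWithin_inter_of_mem (mem_nhdsWithin_of_mem_nhds hU)] at hmap
  have hx := mem_of_mem_nhds hU
  rcases hf with hf | hf
  · exact h.imp (eq_bot fun z hz ↦ hf hx hz.1 hz.2) (eq_bot fun z hz ↦ hf hz.1 hx hz.2)
  · exact h.symm.imp (eq_bot fun z hz ↦ hf hx hz.1 hz.2) (eq_bot fun z hz ↦ hf hz.1 hx hz.2)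

end Gap

/-! ### Minimal actions and Schreier graphs -/

section Minimal

variable (Γ X : Type*) [Group Γ] [TopologicalSpace X] [MulAction Γ X] [IsMinimal Γ X] [Infinite X]

theorem infinite_orbit_of_isMinimal [T1Space X] (x : X) : (orbit Γ x).Infinite := fun h ↦
  infinite_univ ((h.isClosed.closure_eq.symm.trans (dense_orbit Γ x).closure_eq) ▸ h)

theorem perfectSpace_of_isMinimal [ContinuousConstSMul Γ X] [CompactSpace X] : PerfectSpace X := by
  refine perfectSpace_iff_forall_not_isolated.2 fun x ↦ neBot_iff.2 fun hx ↦ ?_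
  obtain ⟨I, hI⟩ := isCompact_univ.exists_finite_cover_smul Γ
    ((isOpen_singleton_iff_punctured_nhds x).2 hx) (singleton_nonempty x)
  exact infinite_univ ((I.finite_toSet.biUnion fun γ _ ↦ (finite_singleton x).smul_set).subset hI)

end Minimal

section Schreier

theorem exists_infinite_reachable_induce_compl {V : Type*} [Infinite V] (H : SimpleGraph V)
    [H.LocallyFinite] (hH : H.Preconnected) (B : Finset V) :
    ∃ u : ((B : Set V)ᶜ : Set V), {w | (H.induce (B : Set V)ᶜ).Reachable u w}.Infinite := by
  have := Fact.mk hH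
  have : Finite (H.ComponentCompl B) := inferInstance
  have : Infinite ((B : Set V)ᶜ : Set V) := B.finite_toSet.infinite_compl.to_subtype
  obtain ⟨c, hc⟩ := Finite.exists_infinite_fiber (H.induce (B : Set V)ᶜ).connectedComponentMk
  obtain ⟨u, rfl⟩ := c.exists_rep
  refine ⟨u, (infinite_coe_iff.1 hc).mono ?_⟩
  intro w hw
  exact (SimpleGraph.ConnectedComponent.exact hw).symm

variable {Γ X : Type*} [Group Γ] [MulAction Γ X]

/-- The Schreier graph of the action on `X` with respect to `S`, as a simple graph: orientations,
labels, loops and multiplicities of edges are forgotten. -/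
def schreierGraph (X : Type*) [MulAction Γ X] (S : Set Γ) : SimpleGraph X :=
  SimpleGraph.fromRel fun x y ↦ ∃ s ∈ S, s • x = y

theorem exists_smul_eq_of_schreierGraph_adj {S : Set Γ} {x y : X}
    (h : (schreierGraph X S).Adj x y) : ∃ s ∈ S ∪ S⁻¹, s • x = y := by
  obtain ⟨-, ⟨s, hs, rfl⟩ | ⟨s, hs, rfl⟩⟩ := h
  · exact ⟨s, .inl hs, rfl⟩
  · exact ⟨s⁻¹, .inr (inv_mem_inv.2 hs), inv_smul_smul s y⟩

theorem finite_neighborSet_schreierGraph {S : Set Γ} (hS : S.Finite) (x : X) :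
    ((schreierGraph X S).neighborSet x).Finite :=
  ((hS.union hS.inv).image (· • x)).subset fun _ h ↦ exists_smul_eq_of_schreierGraph_adj h

theorem reachable_schreierGraph_smul {S : Set Γ} {γ : Γ} (hγ : γ ∈ Subgroup.closure S) (x : X) :
    (schreierGraph X S).Reachable x (γ • x) := by
  induction hγ using Subgroup.closure_induction generalizing x with
  | mem s hs =>
    by_cases hx : x = s • x
    · rw [← hx]
    · exact SimpleGraph.Adj.reachable ⟨hx, .inl ⟨s, hs, rfl⟩⟩
  | one => rw [one_smul]
  | mul a b _ _ iha ihb => exact mul_smul a b x ▸ (ihb x).trans (iha (b • x))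
  | inv a _ iha => simpa using (iha (a⁻¹ • x)).symm

theorem preconnected_schreierGraph [IsPretransitive Γ X] {S : Set Γ} (hS : Subgroup.closure S = ⊤) :
    (schreierGraph X S).Preconnected := fun x y ↦ by
  obtain ⟨γ, rfl⟩ := exists_smul_eq Γ x y
  exact reachable_schreierGraph_smul (hS ▸ Subgroup.mem_top γ) x

end Schreier

/-! ### Differentiable extensions -/

section Extension

variable {A : Set ℝ} {f g : A → A} {C C' : ℝ≥0} {U U' : Set ℝ} {F : ℝ → ℝ} {δ D D' r r' : ℝ}
  {x y : A}

theorem tendsto_slope_of_hasDerivAt {d : ℝ} (hF : HasDerivAt F d x)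
    (heq : ∀ᶠ y : A in 𝓝 x, F y = f y) :
    Tendsto (fun y : A ↦ ((f y : ℝ) - f x) / (y - x)) (𝓝[≠] x) (𝓝 d) := by
  have hval : Tendsto ((↑) : A → ℝ) (𝓝[≠] x) (𝓝[≠] ↑x) :=
    continuous_subtype_val.continuousWithinAt.tendsto_nhdsWithin fun y hy ↦ Subtype.coe_ne_coe.2 hy
  refine ((hasDerivAt_iff_tendsto_slope.1 hF).comp hval).congr' ?_
  filter_upwards [heq.filter_mono nhdsWithin_le_nhds] with y hy
  rw [Function.comp_apply, slope_def_field, hy, heq.self_of_nhds]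

/-- `f` extends from `A ∩ U` to a map differentiable on `U` with derivative bounded by `D`. This is
the only information kept about long compositions of `C^{1+Lip}` maps. -/
def HasBoundedExtension (f : A → A) (U : Set ℝ) (D : ℝ) : Prop :=
  ∃ F : ℝ → ℝ, (∀ z ∈ U, DifferentiableAt ℝ F z ∧ ‖deriv F z‖ ≤ D) ∧ ∀ y : A, ↑y ∈ U → F y = f y

theorem HasBoundedExtension.mono (h : HasBoundedExtension f U D) (hU : U' ⊆ U) (hD : D ≤ D') :
    HasBoundedExtension f U' D' := by
  obtain ⟨F, hF, heq⟩ := h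
  exact ⟨F, fun z hz ↦ (hF z (hU hz)).imp_right hD.trans', fun y hy ↦ heq y (hU hy)⟩

theorem HasBoundedExtension.id : HasBoundedExtension (id : A → A) U 1 :=
  ⟨_root_.id, fun _ _ ↦ ⟨differentiableAt_id, by simp⟩, fun _ _ ↦ rfl⟩

theorem HasBoundedExtension.dist_le (h : HasBoundedExtension f U D) (hU : Convex ℝ U)
    (hx : ↑x ∈ U) (hy : ↑y ∈ U) : dist (f x) (f y) ≤ D * dist x y := by
  obtain ⟨F, hF, heq⟩ := h
  rw [dist_comm x, dist_comm (f x), Subtype.dist_eq, ← heq x hx, ← heq y hy]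
  exact hU.norm_image_sub_le_of_norm_deriv_le (fun z hz ↦ (hF z hz).1) (fun z hz ↦ (hF z hz).2)
    hx hy

theorem HasBoundedExtension.comp (hg : HasBoundedExtension g (ball (f x) r') D')
    (hf : HasBoundedExtension f (ball x r) D) (hD : 0 < D) (hr : D * r ≤ r') :
    HasBoundedExtension (g ∘ f) (ball x r) (D' * D) := by
  obtain ⟨F, hF, hFeq⟩ := hf
  obtain ⟨G, hG, hGeq⟩ := hg
  have hmaps (z : ℝ) (hz : z ∈ ball (x : ℝ) r) : F z ∈ ball (f x : ℝ) r' := by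
    have hx : (x : ℝ) ∈ ball (x : ℝ) r := mem_ball_self (pos_of_mem_ball hz)
    rw [← hFeq x hx]
    calc dist (F z) (F x)
      _ ≤ D * dist z x := (convex_ball (x : ℝ) r).norm_image_sub_le_of_norm_deriv_le
        (fun z hz ↦ (hF z hz).1) (fun z hz ↦ (hF z hz).2) hx hz
      _ < D * r := by gcongr; exact hz
      _ ≤ r' := hr
  refine ⟨G ∘ F, fun z hz ↦ ⟨(hG _ (hmaps z hz)).1.comp z (hF z hz).1, ?_⟩, fun y hy ↦ ?_⟩
  · rw [deriv_comp z (hG _ (hmaps z hz)).1 (hF z hz).1, norm_mul]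
    have := hG _ (hmaps z hz)
    exact mul_le_mul this.2 (hF z hz).2 (norm_nonneg _) ((norm_nonneg _).trans this.2)
  · have hy' := hmaps y hy
    rw [hFeq y hy] at hy'
    rw [Function.comp_apply, hFeq y hy, hGeq _ hy', Function.comp_apply]

/-- `F` is a `C^{1+Lip}` extension of `f` to `U`: its derivative does not vanish and `log |F'|` is
`C`-Lipschitz. Differentiability is implied, as `deriv` takes the value `0` elsewhere. -/
structure IsLogLipExtension (f : A → A) (C : ℝ≥0) (U : Set ℝ) (F : ℝ → ℝ) : Prop where
  deriv_ne_zero : ∀ z ∈ U, deriv F z ≠ 0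
  lipschitzOnWith : LipschitzOnWith C (fun z ↦ Real.log |deriv F z|) U
  eq_apply : ∀ y : A, ↑y ∈ U → F y = f y

/-- `f` is of class `C^{1+Lip}`: it has such extensions locally, with uncontrolled constants. -/
def IsLocallyLogLip (f : A → A) : Prop :=
  ∀ x : A, ∃ C, ∃ U ∈ 𝓝 (x : ℝ), ∃ F, IsLogLipExtension f C U F

/-- The uniform form of `IsLocallyLogLip`: one Lipschitz constant and one radius serve at every
point. -/
def HasLogLipExtensions (f : A → A) (C : ℝ≥0) (δ : ℝ) : Prop :=
  ∀ x : A, ∃ F, IsLogLipExtension f C (ball x δ) F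

theorem IsLogLipExtension.mono (hF : IsLogLipExtension f C U F) (hC : C ≤ C') (hU : U' ⊆ U) :
    IsLogLipExtension f C' U' F where
  deriv_ne_zero z hz := hF.deriv_ne_zero z (hU hz)
  lipschitzOnWith := (hF.lipschitzOnWith.mono hU).weaken hC
  eq_apply y hy := hF.eq_apply y (hU hy)

theorem IsLogLipExtension.differentiableAt (hF : IsLogLipExtension f C U F) {z : ℝ} (hz : z ∈ U) :
    DifferentiableAt ℝ F z :=
  differentiableAt_of_deriv_ne_zero (hF.deriv_ne_zero z hz)

theorem IsLogLipExtension.abs_deriv_le (hF : IsLogLipExtension f C U F) {w z : ℝ} (hw : w ∈ U)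
    (hz : z ∈ U) : |deriv F w| ≤ |deriv F z| * Real.exp (C * dist w z) := by
  have hlog := (Real.sub_le_dist _ _).trans (hF.lipschitzOnWith.dist_le_mul w hw z hz)
  calc |deriv F w| = Real.exp (Real.log |deriv F w|) :=
        (Real.exp_log (abs_pos.2 (hF.deriv_ne_zero w hw))).symm
    _ ≤ Real.exp (Real.log |deriv F z| + C * dist w z) := Real.exp_le_exp.2 (by linarith)
    _ = |deriv F z| * Real.exp (C * dist w z) := by
      rw [Real.exp_add, Real.exp_log (abs_pos.2 (hF.deriv_ne_zero z hz))]

theorem IsLogLipExtension.strictMonoOn_or_strictAntiOn (hF : IsLogLipExtension f C U F)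
    (hU : Convex ℝ U) :
    StrictMonoOn f (Subtype.val ⁻¹' U) ∨ StrictAntiOn f (Subtype.val ⁻¹' U) := by
  have hc : ContinuousOn F U := fun z hz ↦ (hF.differentiableAt hz).continuousAt.continuousWithinAt
  have heq {y : A} (hy : ↑y ∈ U) := hF.eq_apply y hy
  refine (hasDerivWithinAt_forall_lt_or_forall_gt_of_forall_ne hU
    (fun z hz ↦ (hF.differentiableAt hz).hasDerivAt.hasDerivWithinAt) hF.deriv_ne_zero).symm.imp
    (fun hpos y hy z hz hyz ↦ ?_) fun hneg y hy z hz hyz ↦ ?_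
  all_goals rw [← Subtype.coe_lt_coe, ← heq hy, ← heq hz]
  · exact strictMonoOn_of_deriv_pos hU hc (fun z hz ↦ hpos z (interior_subset hz)) hy hz hyz
  · exact strictAntiOn_of_deriv_neg hU hc (fun z hz ↦ hneg z (interior_subset hz)) hy hz hyz

theorem IsLogLipExtension.exists_abs_deriv_eq (hF : IsLogLipExtension f C U F) (hU : Convex ℝ U)
    (hx : ↑x ∈ U) (hy : ↑y ∈ U) (hxy : x ≠ y) :
    ∃ c ∈ segment ℝ (x : ℝ) y, |deriv F c| = dist (f x) (f y) / dist x y := by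
  obtain ⟨c, hc, hslope⟩ := domain_mvt
    (fun z hz ↦ (hF.differentiableAt hz).hasFDerivAt.hasFDerivWithinAt) hU hx hy
  refine ⟨c, hc, ?_⟩
  rw [fderiv_eq_smul_deriv, smul_eq_mul, hF.eq_apply x hx, hF.eq_apply y hy] at hslope
  have hne : |(y : ℝ) - x| ≠ 0 := abs_ne_zero.2 (sub_ne_zero.2 (Subtype.coe_ne_coe.2 hxy.symm))
  rw [dist_comm x, dist_comm (f x), Subtype.dist_eq, Subtype.dist_eq, Real.dist_eq, Real.dist_eq,
    hslope, abs_mul, mul_div_cancel_left₀ _ hne]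

theorem IsLogLipExtension.hasBoundedExtension (hF : IsLogLipExtension f C (ball x δ) F)
    (hxy : x ≠ y) (hδ : dist x y < δ) :
    HasBoundedExtension f (ball x (dist x y))
      (dist (f x) (f y) / dist x y * Real.exp (2 * C * dist x y)) := by
  have hsub : ball (x : ℝ) (dist x y) ⊆ ball x δ := ball_subset_ball hδ.le
  have hx : (x : ℝ) ∈ ball (x : ℝ) δ := mem_ball_self (dist_nonneg.trans_lt hδ)
  have hy : (y : ℝ) ∈ ball (x : ℝ) δ := mem_ball'.2 hδ
  obtain ⟨c, hc, hslope⟩ := hF.exists_abs_deriv_eq (convex_ball _ _) hx hy hxy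
  refine ⟨F, fun z hz ↦ ⟨hF.differentiableAt (hsub hz), ?_⟩, fun y hy ↦ hF.eq_apply y (hsub hy)⟩
  have hcδ : c ∈ ball (x : ℝ) δ := (convex_ball _ _).segment_subset hx hy hc
  have hzc : dist z c ≤ 2 * dist x y := by
    have : c ∈ closedBall (x : ℝ) (dist x y) := (convex_closedBall _ _).segment_subset
      (mem_closedBall_self dist_nonneg) (mem_closedBall'.2 le_rfl) hc
    linarith [dist_triangle_right z c x, mem_ball.1 hz, mem_closedBall.1 this]
  calc |deriv F z| ≤ |deriv F c| * Real.exp (C * dist z c) := hF.abs_deriv_le (hsub hz) hcδ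
    _ ≤ |deriv F c| * Real.exp (2 * C * dist x y) := by
      gcongr ?_ * Real.exp ?_
      linarith [mul_le_mul_of_nonneg_left hzc C.coe_nonneg]
    _ = _ := by rw [hslope]

theorem IsLogLipExtension.hasBoundedExtension_comp (hF : IsLogLipExtension f C (ball x δ) F)
    (hxy : x ≠ y) (hδ : dist x y < δ) (hfxy : f x ≠ f y) {b σ : ℝ} (hσ : 0 ≤ σ)
    (hg : HasBoundedExtension g (ball (f x) (dist (f x) (f y) * Real.exp (-(2 * C * σ))))
      (b / dist (f x) (f y) * Real.exp (2 * C * σ))) :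
    HasBoundedExtension (g ∘ f) (ball x (dist x y * Real.exp (-(2 * C * (dist x y + σ)))))
      (b / dist x y * Real.exp (2 * C * (dist x y + σ))) := by
  have hx : 0 < dist x y := dist_pos.2 hxy
  have hfx : 0 < dist (f x) (f y) := dist_pos.2 hfxy
  have hsub : dist x y * Real.exp (-(2 * C * (dist x y + σ))) ≤ dist x y :=
    mul_le_of_le_one_right hx.le (Real.exp_le_one_iff.2 (neg_nonpos.2 (by positivity)))
  have hf := (hF.hasBoundedExtension hxy hδ).mono (ball_subset_ball hsub) le_rfl
  have hexp : Real.exp (2 * C * dist x y) * Real.exp (-(2 * C * (dist x y + σ))) =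
      Real.exp (-(2 * C * σ)) := by rw [← Real.exp_add]; ring_nf
  convert hg.comp hf (by positivity) (le_of_eq ?_) using 1
  · rw [mul_add, Real.exp_add]
    field_simp
  · rw [← hexp]
    field_simp

theorem HasLogLipExtensions.mono (h : HasLogLipExtensions f C δ) (hC : C ≤ C') {δ'} (hδ : δ' ≤ δ) :
    HasLogLipExtensions f C' δ' := fun x ↦
  (h x).imp fun _ hF ↦ hF.mono hC (ball_subset_ball hδ)

theorem HasLogLipExtensions.strictMonoOn_or_strictAntiOn (h : HasLogLipExtensions f C δ) (x : A) :
    StrictMonoOn f (ball x δ) ∨ StrictAntiOn f (ball x δ) :=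
  (h x).elim fun _ hF ↦ hF.strictMonoOn_or_strictAntiOn (convex_ball _ _)

theorem HasLogLipExtensions.isGap_of_apply (h : HasLogLipExtensions f C δ) (hxy : dist x y < δ)
    (hgap : IsGap (f x) (f y)) : IsGap x y := by
  have hsub : uIcc x y ⊆ ball x δ := fun z hz ↦ mem_ball'.2 <| hxy.trans_le' <|
    Real.dist_left_le_of_mem_uIcc (mem_uIcc.2 (mem_uIcc.1 hz))
  exact IsGap.of_apply
    ((h.strictMonoOn_or_strictAntiOn x).imp (·.mono hsub) (·.mono hsub)) hgap

theorem IsLocallyLogLip.eventually_hasLogLipExtensions [CompactSpace A] (hf : IsLocallyLogLip f) :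
    ∀ᶠ p : ℝ≥0 × ℝ in atTop ×ˢ 𝓝[>] 0, HasLogLipExtensions f p.1 p.2 := by
  suffices ∀ᶠ p : ℝ≥0 × ℝ in atTop ×ˢ 𝓝[>] 0,
      ∀ x ∈ (univ : Set A), ∃ F, IsLogLipExtension f p.1 (ball x p.2) F by
    simpa only [mem_univ, true_imp_iff, HasLogLipExtensions] using this
  refine isCompact_univ.induction_on (by simp)
    (fun s t hst ht ↦ ht.mono fun p h x hx ↦ h x (hst hx)) (fun s t hs ht ↦ ?_) fun x _ ↦ ?_
  · filter_upwards [hs, ht] with p hs ht x hx using hx.elim (hs x) (ht x)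
  · obtain ⟨C, U, hU, F, hF⟩ := hf x
    obtain ⟨ε, hε, hεU⟩ := Metric.mem_nhds_iff.1 hU
    refine ⟨ball x (ε / 2), mem_nhdsWithin_of_mem_nhds (ball_mem_nhds x (half_pos hε)), ?_⟩
    filter_upwards [(eventually_ge_atTop C).prod_mk (Ioc_mem_nhdsGT (half_pos hε))]
      with p ⟨hC, hp⟩ y hy
    refine ⟨F, hF.mono hC ((ball_subset_ball' ?_).trans hεU)⟩
    have : dist (y : ℝ) x < ε / 2 := hy
    linarith [hp.2]

theorem IsLocallyLogLip.continuous (hf : IsLocallyLogLip f) : Continuous f := by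
  refine continuous_iff_continuousAt.2 fun x ↦ tendsto_subtype_rng.2 ?_
  obtain ⟨C, U, hU, F, hF⟩ := hf x
  have hFx := (hF.differentiableAt (mem_of_mem_nhds hU)).continuousAt.tendsto.comp
    continuous_subtype_val.continuousAt
  rw [← hF.eq_apply x (mem_of_mem_nhds hU)]
  refine hFx.congr' ?_
  filter_upwards [preimage_coe_mem_nhds_subtype.2 (mem_nhdsWithin_of_mem_nhds hU)] with y hy
    using hF.eq_apply y hy

theorem IsLocallyLogLip.isEndpoint_of_apply (hf : IsLocallyLogLip f) (hx : IsEndpoint (f x)) :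
    IsEndpoint x := by
  obtain ⟨C, U, hU, F, hF⟩ := hf x
  obtain ⟨ε, hε, hεU⟩ := Metric.mem_nhds_iff.1 hU
  exact hx.of_apply (ball_mem_nhds x hε) hf.continuous.continuousAt
    ((hF.mono le_rfl hεU).strictMonoOn_or_strictAntiOn (convex_ball _ _))

theorem IsLocallyLogLip.exists_hasBoundedExtension (hf : IsLocallyLogLip f) (x : A) :
    ∃ ε > 0, ∃ D > 0, HasBoundedExtension f (ball x ε) D := by
  obtain ⟨C, U, hU, F, hF⟩ := hf x
  obtain ⟨ε, hε, hεU⟩ := Metric.mem_nhds_iff.1 hU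
  have hx := hεU (mem_ball_self hε)
  refine ⟨ε, hε, |deriv F x| * Real.exp (C * ε), ?_, F, fun z hz ↦
    ⟨hF.differentiableAt (hεU hz), ?_⟩, fun y hy ↦ hF.eq_apply y (hεU hy)⟩
  · exact mul_pos (abs_pos.2 (hF.deriv_ne_zero x hx)) (Real.exp_pos _)
  · refine (hF.abs_deriv_le (hεU hz) hx).trans ?_
    gcongr
    exact (mem_ball.1 hz).le

end Extension

/-! ### Contraction along paths of short gaps -/

section Contraction

variable {A : Set ℝ} {C : ℝ≥0} {δ r : ℝ} {u p : A} {Γ : Type*} [Group Γ] [MulAction Γ A]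

-- On a gap of length `ℓ` the derivative of one step is the ratio of the lengths of the two gaps, up
-- to a factor `exp (2 * C * ℓ)`. The ratios telescope along the walk, the factors accumulate.
theorem exists_smul_hasBoundedExtension_of_walk {V : Type*} {H : SimpleGraph V} {x y : V → A}
    (hne : ∀ v, x v ≠ y v) (hlt : ∀ v, dist (x v) (y v) < δ)
    (hadj : ∀ v w, H.Adj v w →
      ∃ s : Γ, HasLogLipExtensions (s • · : A → A) C δ ∧ s • x v = x w ∧ s • y v = y w)
    {u w : V} (p : H.Walk u w) :
    ∃ γ : Γ, γ • x u = x w ∧ HasBoundedExtension (γ • · : A → A)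
      (ball (x u) (dist (x u) (y u) *
        Real.exp (-(2 * C * (p.support.map fun v ↦ dist (x v) (y v)).sum))))
      (dist (x w) (y w) / dist (x u) (y u) *
        Real.exp (2 * C * (p.support.map fun v ↦ dist (x v) (y v)).sum)) := by
  have hpos (v : V) : 0 < dist (x v) (y v) := dist_pos.2 (hne v)
  induction p with
  | nil =>
    refine ⟨1, one_smul Γ _, ?_⟩
    simp only [one_smul, SimpleGraph.Walk.support_nil, List.map_singleton, List.sum_singleton]
    refine HasBoundedExtension.id.mono subset_rfl ?_
    rw [div_self (hpos _).ne', one_mul]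
    exact Real.one_le_exp (mul_nonneg (by positivity) dist_nonneg)
  | @cons u v w h p ih =>
    obtain ⟨γ, hγ, hγext⟩ := ih
    obtain ⟨s, hs, hsx, hsy⟩ := hadj _ _ h
    obtain ⟨F, hF⟩ := hs (x u)
    rw [← hsx, ← hsy] at hγext
    rw [SimpleGraph.Walk.support_cons, List.map_cons, List.sum_cons]
    refine ⟨γ * s, by rw [mul_smul, hsx, hγ], ?_⟩
    simpa only [Function.comp_def, mul_smul] using hF.hasBoundedExtension_comp (hne u) (hlt u)
      ((MulAction.injective s).ne (hne u)) (List.sum_nonneg (by simp)) hγext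

theorem sum_map_support_le_of_isGap {V : Type*} {H : SimpleGraph V} {x y : V → A}
    (hA : Bornology.IsBounded A) (hx : Function.Injective x) (hgap : ∀ v, IsGap (x v) (y v))
    {u w : V} {p : H.Walk u w} (hp : p.IsPath) :
    (p.support.map fun v ↦ dist (x v) (y v)).sum ≤ 2 * Metric.diam A := by
  classical
  have : Nonempty V := ⟨u⟩
  calc (p.support.map fun v ↦ dist (x v) (y v)).sum
    _ = ∑ v ∈ p.support.toFinset, dist (x v) (y v) := (List.sum_toFinset _ hp.support_nodup).symm
    _ = ∑ a ∈ p.support.toFinset.map ⟨x, hx⟩, dist a (y (Function.invFun x a)) := by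
      simp [Function.leftInverse_invFun hx _]
    _ ≤ 2 * Metric.diam A := sum_dist_le_of_isGap hA <| by
      simp [Function.leftInverse_invFun hx _, hgap]

theorem exists_smul_hasBoundedExtension_of_reachable (hA : Bornology.IsBounded A) {V : Type*}
    {H : SimpleGraph V} {x y : V → A} (hx : Function.Injective x) (hgap : ∀ v, IsGap (x v) (y v))
    (hlt : ∀ v, dist (x v) (y v) < δ)
    (hadj : ∀ v w, H.Adj v w →
      ∃ s : Γ, HasLogLipExtensions (s • · : A → A) C δ ∧ s • x v = x w ∧ s • y v = y w)
    {u w : V} (h : H.Reachable u w) :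
    ∃ γ : Γ, γ • x u = x w ∧ HasBoundedExtension (γ • · : A → A)
      (ball (x u) (dist (x u) (y u) * Real.exp (-(2 * C * (2 * Metric.diam A)))))
      (dist (x w) (y w) / dist (x u) (y u) * Real.exp (2 * C * (2 * Metric.diam A))) := by
  obtain ⟨p, hp⟩ := h.exists_isPath
  have hσ := sum_map_support_le_of_isGap hA hx hgap hp
  obtain ⟨γ, hγ, hext⟩ :=
    exists_smul_hasBoundedExtension_of_walk (fun v ↦ (hgap v).ne) hlt hadj p
  refine ⟨γ, hγ, hext.mono (ball_subset_ball ?_) ?_⟩ <;> gcongr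

theorem exists_infinite_reachable_isGap_dist_lt [CompactSpace A] {S : Set Γ}
    (hSfin : S.Finite) (hS : Subgroup.closure S = ⊤) {x₀ : A}
    (hend : ∀ x ∈ orbit Γ x₀, IsEndpoint x) (hinf : (orbit Γ x₀).Infinite) (hδ : 0 < δ) :
    ∃ V : Set (orbit Γ x₀), (∀ v ∈ V, ∃ y, IsGap (v : A) y ∧ dist ↑v y < δ) ∧
      ∃ u, {w | ((schreierGraph (orbit Γ x₀) S).induce V).Reachable u w}.Infinite := by
  have := hinf.to_subtype
  let B : Finset (orbit Γ x₀) := ((finite_isEndpoint_of_isGap_dist_ge hδ).preimage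
    Subtype.val_injective.injOn).toFinset
  have (x : orbit Γ x₀) : Fintype ((schreierGraph (orbit Γ x₀) S).neighborSet x) :=
    (finite_neighborSet_schreierGraph hSfin x).fintype
  refine ⟨(B : Set (orbit Γ x₀))ᶜ, fun v hv ↦ ?_,
    exists_infinite_reachable_induce_compl _ (preconnected_schreierGraph hS) B⟩
  contrapose! hv
  exact notMem_compl_iff.2 ((Finite.mem_toFinset _).2 ⟨hend v v.2, hv⟩)

theorem exists_hasLogLipExtensions_isGap_smul [CompactSpace A] {S : Set Γ} (hS : S.Finite)
    (hΓ : ∀ γ : Γ, IsLocallyLogLip (γ • · : A → A)) :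
    ∃ C : ℝ≥0, ∃ δ > 0, ∀ s ∈ S, HasLogLipExtensions (s • · : A → A) C δ ∧
      ∀ x y : A, IsGap x y → dist x y < δ → IsGap (s • x) (s • y) := by
  obtain ⟨⟨C, ε⟩, hC, hε : 0 < ε⟩ := (((hS.union hS.inv).eventually_all.2 fun s _ ↦
    (hΓ s).eventually_hasLogLipExtensions).and
      ((eventually_mem_nhdsWithin (a := (0 : ℝ)) (s := Ioi 0)).prod_inr atTop)).exists
  have hunif : ∀ᶠ δ in 𝓝[>] (0 : ℝ),
      ∀ s ∈ S, ∀ x y : A, dist x y < δ → dist (s • x) (s • y) < ε := by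
    refine hS.eventually_all.2 fun s _ ↦ ?_
    obtain ⟨δ, hδ, h⟩ := Metric.uniformContinuous_iff.1
      (CompactSpace.uniformContinuous_of_continuous (hΓ s).continuous) ε hε
    filter_upwards [Ioc_mem_nhdsGT hδ] with δ' hδ' x y hxy using h (hxy.trans_le hδ'.2)
  obtain ⟨δ, hδS, hδ, hδε⟩ := (hunif.and (Ioc_mem_nhdsGT hε)).exists
  refine ⟨C, δ, hδ, fun s hs ↦ ⟨(hC s (.inl hs)).mono le_rfl hδε, fun x y hgap hxy ↦ ?_⟩⟩
  -- A locally monotone map reflects gaps, but may map far away points of `A` into the image of a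
  -- gap; so monotonicity is used for the inverse.
  refine (hC s⁻¹ (.inr (inv_mem_inv.2 hs))).isGap_of_apply (hδS s hs x y hxy) ?_
  simpa only [inv_smul_smul] using hgap

/-- The `r`-ball around `u` can be contracted by elements of `Γ` with arbitrarily small derivative
bound and with the image of `u` arbitrarily close to `p`. -/
def ContractsTo (Γ : Type*) [Group Γ] [MulAction Γ A] (u : A) (r : ℝ) (p : A) : Prop :=
  ∀ η > 0, ∃ γ : Γ, HasBoundedExtension (γ • · : A → A) (ball u r) η ∧ dist (γ • u) p < η

theorem isClosed_setOf_contractsTo : IsClosed {p | ContractsTo Γ u r p} := by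
  refine isClosed_of_closure_subset fun p hp η hη ↦ ?_
  obtain ⟨q, hq, hpq⟩ := Metric.mem_closure_iff.1 hp (η / 2) (half_pos hη)
  obtain ⟨γ, hγ, hγq⟩ := hq (η / 2) (half_pos hη)
  exact ⟨γ, hγ.mono subset_rfl (half_le_self hη.le),
    by linarith [dist_triangle_right (γ • u) p q]⟩

theorem ContractsTo.smul (h : ContractsTo Γ u r p) {s : Γ}
    (hs : IsLocallyLogLip (s • · : A → A)) (hr : 0 < r) : ContractsTo Γ u r (s • p) := by
  intro η hη
  obtain ⟨ε, hε, D, hD, hext⟩ := hs.exists_hasBoundedExtension p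
  obtain ⟨ρ, hρ, hρε⟩ : ∃ ρ > 0, ρ * (r + 1) ≤ ε ∧ D * ρ ≤ η :=
    ⟨min (ε / (r + 1)) (η / D), by positivity,
      (le_div_iff₀ (by positivity)).1 (min_le_left _ _),
      (le_div_iff₀' hD).1 (min_le_right _ _)⟩
  obtain ⟨γ, hγ, hγp⟩ := h ρ hρ
  have hγpρ : dist ((γ • u : A) : ℝ) p < ρ := hγp
  have hsub : ball ((γ • u : A) : ℝ) (ρ * r) ⊆ ball p ε :=
    ball_subset_ball' (by linarith)
  refine ⟨s * γ, ?_, ?_⟩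
  · simpa only [Function.comp_def, mul_smul] using
      ((hext.mono hsub le_rfl).comp hγ hρ le_rfl).mono subset_rfl hρε.2
  · have hle := hext.dist_le (convex_ball _ _) (hsub (mem_ball_self (by positivity)))
      (mem_ball_self hε)
    rw [mul_smul]
    calc dist (s • γ • u) (s • p) ≤ D * dist (γ • u) p := hle
      _ < D * ρ := by gcongr
      _ ≤ η := hρε.2

theorem ContractsTo.of_isMinimal [IsMinimal Γ A] (hΓ : ∀ γ : Γ, IsLocallyLogLip (γ • · : A → A))
    (h : ContractsTo Γ u r p) (hr : 0 < r) (q : A) : ContractsTo Γ u r q := by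
  have hinv (s : Γ) : s • {p | ContractsTo Γ u r p} ⊆ {p | ContractsTo Γ u r p} :=
    smul_set_subset_iff.2 fun _ hp ↦ hp.smul (hΓ s) hr
  rcases eq_empty_or_univ_of_smul_invariant_closed Γ isClosed_setOf_contractsTo hinv with h' | h'
  · exact (h'.subset h).elim
  · exact h'.superset (mem_univ q)

theorem ContractsTo.exists_fixedPoint [CompactSpace A] (h : ContractsTo Γ u r u) (hr : 0 < r) :
    ∃ (γ : Γ) (x : A), γ • x = x ∧ ∃ d : ℝ, |d| < 1 ∧
      Tendsto (fun y : A ↦ (((γ • y : A) : ℝ) - x) / (y - x)) (𝓝[≠] x) (𝓝 d) := by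
  obtain ⟨γ, hγ, hγu⟩ := h (min (1 / 2) (r / 4)) (by positivity)
  replace hγ := hγ.mono subset_rfl (min_le_left _ _)
  have hsub : closedBall u (r / 2) ⊆ ball u r := closedBall_subset_ball (half_lt_self hr)
  have hdist {y z : A} (hy : y ∈ closedBall u (r / 2)) (hz : z ∈ closedBall u (r / 2)) :
      dist (γ • y) (γ • z) ≤ 1 / 2 * dist y z :=
    hγ.dist_le (convex_ball _ _) (hsub hy) (hsub hz)
  have hmaps : MapsTo (γ • ·) (closedBall u (r / 2)) (closedBall u (r / 2)) := fun y hy ↦ by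
    have hu := hdist hy (mem_closedBall_self (half_pos hr).le)
    rw [mem_closedBall] at hy ⊢
    linarith [dist_triangle (γ • y) (γ • u) u, hγu.trans_le (min_le_right _ _)]
  have hlip : LipschitzWith (1 / 2) (hmaps.restrict _ _ _) := LipschitzWith.of_dist_le_mul
    fun y z ↦ by simpa [Subtype.dist_eq] using hdist y.2 z.2
  have hcontr : ContractingWith (1 / 2) (hmaps.restrict _ _ _) := ⟨by norm_num, hlip⟩
  obtain ⟨x, hx, hfix, -⟩ := hcontr.exists_fixedPoint' isClosed_closedBall.isComplete hmaps
    (mem_closedBall_self (half_pos hr).le) (edist_ne_top u (γ • u))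
  obtain ⟨F, hF, heq⟩ := hγ
  refine ⟨γ, x, hfix, deriv F x, (hF x (hsub hx)).2.trans_lt one_half_lt_one, ?_⟩
  have hslope := tendsto_slope_of_hasDerivAt (f := (γ • ·)) (hF x (hsub hx)).1.hasDerivAt <| by
    filter_upwards [isOpen_ball.mem_nhds (hsub hx)] with y hy using heq y hy
  simpa only [hfix.eq] using hslope

theorem exists_contractsTo_of_infinite_isGap [CompactSpace A] {W : Set A} (hW : W.Infinite)
    {E : ℝ} (hE : 0 < E) (hext : ∀ w ∈ W, ∃ y, IsGap w y ∧ ∃ γ : Γ, γ • u = w ∧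
      HasBoundedExtension (γ • · : A → A) (ball u r) (dist w y * E)) :
    ∃ p, ContractsTo Γ u r p := by
  have hA : Bornology.IsBounded A := (isCompact_iff_compactSpace.2 ‹_›).isBounded
  obtain ⟨p, hp⟩ := hW.exists_accPt_cofinite_inf_principal
  refine ⟨p, fun η hη ↦ ?_⟩
  have hev : ∀ᶠ w in 𝓝[≠] p ⊓ (cofinite ⊓ 𝓟 W),
      dist w p < η ∧ (∀ y, IsGap w y → dist w y < η / E) ∧ w ∈ W := by
    refine Eventually.and (.filter_mono (inf_le_left.trans nhdsWithin_le_nhds)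
      (ball_mem_nhds p hη)) (.filter_mono inf_le_right (eventually_inf_principal.2 ?_))
    filter_upwards [(finite_setOf_isGap_dist_ge hA (div_pos hη hE)).compl_mem_cofinite]
      with w hw hwW
    exact ⟨fun y hy ↦ not_le.1 fun hle ↦ hw ⟨y, hy, hle⟩, hwW⟩
  obtain ⟨w, hwp, hshort, hw⟩ := @Eventually.exists _ _ _ hp hev
  obtain ⟨y, hy, γ, rfl, hγ⟩ := hext w hw
  exact ⟨γ, hγ.mono subset_rfl ((lt_div_iff₀ hE).1 (hshort y hy)).le, hwp⟩

theorem exists_contractsTo [CompactSpace A] [PerfectSpace A] [Group.FG Γ]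
    (hΓ : ∀ γ : Γ, IsLocallyLogLip (γ • · : A → A)) {x₀ : A} (hx₀ : IsEndpoint x₀)
    (hinf : (orbit Γ x₀).Infinite) : ∃ u r, 0 < r ∧ ∃ p, ContractsTo Γ (u : A) r p := by
  have : OrderTopology A := orderTopology_of_compactSpace
  have hA : Bornology.IsBounded A := (isCompact_iff_compactSpace.2 ‹_›).isBounded
  obtain ⟨S, hS, hSfin⟩ := Group.fg_iff.1 ‹Group.FG Γ›
  obtain ⟨C, δ, hδ, hC⟩ := exists_hasLogLipExtensions_isGap_smul (hSfin.union hSfin.inv) hΓ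
  have hend (x : A) (hx : x ∈ orbit Γ x₀) : IsEndpoint x := by
    obtain ⟨γ, rfl⟩ := mem_orbit_symm.1 hx
    exact (hΓ γ).isEndpoint_of_apply hx₀
  obtain ⟨V, hV, u, hu⟩ := exists_infinite_reachable_isGap_dist_lt hSfin hS hend hinf hδ
  choose y hgap hlt using fun v : V ↦ hV v v.2
  have hadj (v w : V) (h : ((schreierGraph (orbit Γ x₀) S).induce V).Adj v w) : ∃ s : Γ,
      HasLogLipExtensions (s • · : A → A) C δ ∧ s • (v : A) = w ∧ s • y v = y w := by
    obtain ⟨s, hs, hsv⟩ := exists_smul_eq_of_schreierGraph_adj h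
    replace hsv : s • (v : A) = w := congrArg Subtype.val hsv
    exact ⟨s, (hC s hs).1, hsv, ((hC s hs).2 _ _ (hgap v) (hlt v)).unique (hsv ▸ hgap w)⟩
  have hinj : Function.Injective fun v : V ↦ ((v : orbit Γ x₀) : A) :=
    Subtype.val_injective.comp Subtype.val_injective
  have hℓ : 0 < dist (u : A) (y u) := dist_pos.2 (hgap u).ne
  refine ⟨u, dist ↑u (y u) * Real.exp (-(2 * C * (2 * Metric.diam A))), by positivity,
    exists_contractsTo_of_infinite_isGap (hu.image hinj.injOn)
      (E := Real.exp (2 * C * (2 * Metric.diam A)) / dist (u : A) (y u)) (by positivity) ?_⟩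
  rintro _ ⟨w, hw, rfl⟩
  refine ⟨y w, hgap w, ?_⟩
  simpa only [div_mul_eq_mul_div, mul_div_assoc] using
    exists_smul_hasBoundedExtension_of_reachable hA hinj hgap hlt hadj hw

theorem exists_contracting_fixedPoint {A : Set ℝ} [CompactSpace A] [Infinite A] {Γ : Type*}
    [Group Γ] [Group.FG Γ] [MulAction Γ A] [IsMinimal Γ A]
    (hΓ : ∀ γ : Γ, IsLocallyLogLip (γ • · : A → A)) :
    ∃ (γ : Γ) (x : A), γ • x = x ∧ ∃ d : ℝ, |d| < 1 ∧
      Tendsto (fun y : A ↦ (((γ • y : A) : ℝ) - x) / (y - x)) (𝓝[≠] x) (𝓝 d) := by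
  have : ContinuousConstSMul Γ A := ⟨fun γ ↦ (hΓ γ).continuous⟩
  have : PerfectSpace A := perfectSpace_of_isMinimal Γ A
  obtain ⟨x₀, hx₀⟩ := exists_isEndpoint (A := A)
  obtain ⟨u, r, hr, p, hp⟩ := exists_contractsTo hΓ hx₀ (infinite_orbit_of_isMinimal Γ A x₀)
  exact (hp.of_isMinimal hΓ hr u).exists_fixedPoint hr

end Contraction

/-! ### Minimal invariant sets of groups of permutations -/

section PermAction

variable {K A : Set ℝ} {G : Subgroup (Equiv.Perm K)} {f : Equiv.Perm K} {x : ℝ}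

theorem apK_of_mem (f : Equiv.Perm K) (hx : x ∈ K) : apK K f x = f ⟨x, hx⟩ :=
  dif_pos hx

theorem IsD1Lip.isLocallyLogLip (hf : IsD1Lip K f) (hAK : A ⊆ K) {g : A → A}
    (hg : ∀ y : A, (g y : ℝ) = apK K f y) : IsLocallyLogLip g := by
  rintro ⟨x, hx⟩
  obtain ⟨a, b, hxI, F, F', hF, -, -, ⟨C, hC⟩, heq⟩ := hf ⟨x, hAK hx⟩
  have hderiv {z : ℝ} (hz : z ∈ Ioo a b) : deriv F z = F' z := (hF z hz).1.deriv
  refine ⟨C, Ioo a b, Ioo_mem_nhds hxI.1 hxI.2, F, fun z hz ↦ hderiv hz ▸ (hF z hz).2, ?_,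
    fun y hy ↦ (heq y hy (hAK y.2)).trans (hg y).symm⟩
  intro z hz w hw
  simpa only [hderiv hz, hderiv hw] using hC hz hw

theorem IsD1Lip.exists_hasDerivOnK (hf : IsD1Lip K f) (hx : x ∈ K) : ∃ d, HasDerivOnK K f x d := by
  obtain ⟨a, b, hxI, F, F', hF, -, -, -, heq⟩ := hf ⟨x, hx⟩
  refine ⟨F' x, (hasDerivWithinAt_iff_tendsto_slope.1
    (hF x hxI).1.hasDerivWithinAt).congr' ?_⟩
  filter_upwards [mem_nhdsWithin_of_mem_nhds (Ioo_mem_nhds hxI.1 hxI.2), self_mem_nhdsWithin]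
    with y hyI hy
  rw [slope_def_field, heq y hyI hy.1, heq x hxI hx]

theorem HasDerivOnK.tendsto_subtype {d : ℝ} (hf : HasDerivOnK K f x d) (hAK : A ⊆ K) (hx : x ∈ A) :
    Tendsto (fun y : A ↦ (apK K f y - apK K f x) / (y - x)) (𝓝[≠] ⟨x, hx⟩) (𝓝 d) :=
  Tendsto.comp hf <| continuous_subtype_val.continuousWithinAt.tendsto_nhdsWithin
    fun y hy ↦ ⟨hAK y.2, Subtype.coe_ne_coe.2 hy⟩

/-- The action of `G` on an invariant subset of `K`. -/
noncomputable abbrev IsInvariantSet.mulAction (hA : IsInvariantSet K G A) (hAK : A ⊆ K) :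
    MulAction G A where
  smul g x := ⟨apK K g x, hA g g.2 x x.2⟩
  one_smul x := Subtype.ext (apK_of_mem 1 (hAK x.2))
  mul_smul g h x := Subtype.ext <| by
    change apK K (g * h) x = apK K g (apK K h x)
    rw [apK_of_mem _ (hAK x.2), apK_of_mem _ (hAK x.2), apK_of_mem _ (Subtype.coe_prop _)]
    rfl

theorem IsMinimalInvariantSet.isMinimal (hA : IsMinimalInvariantSet K G A) [MulAction G A]
    [ContinuousConstSMul G A] (hsmul : ∀ (g : G) (x : A), ((g • x : A) : ℝ) = apK K g x) :
    IsMinimal G A := by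
  obtain ⟨-, -, hclosed, -, hmin⟩ := hA
  refine (isMinimal_iff_isClosed_smul_invariant G).2 fun s hs hinv ↦ ?_
  refine s.eq_empty_or_nonempty.imp_right fun hne ↦ ?_
  have heq : (↑) '' s = A := hmin _ (hne.image _) (image_subset_iff.2 fun y _ ↦ y.2)
    (hclosed.isClosedEmbedding_subtypeVal.isClosedMap s hs) <| by
      rintro g hg _ ⟨y, hy, rfl⟩
      exact ⟨_, hinv ⟨g, hg⟩ (smul_mem_smul_set hy), hsmul ⟨g, hg⟩ y⟩
  exact Subtype.val_injective.image_injective (heq.trans (image_univ.trans Subtype.range_coe).symm)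

end PermAction

theorem sacksteder_alternative_general {K : Set ℝ} {G : Subgroup (Equiv.Perm K)}
    (hdiff : ∀ g ∈ G, IsD1Lip K g) (hFG : G.FG) {A : Set ℝ} (hA : IsMinimalInvariantSet K G A)
    (hAc : IsCompact A) (hinf : A.Infinite) :
    ∃ g ∈ G, ∃ x ∈ A, AccPt x (𝓟 A) ∧ apK K g x = x ∧ ∃ d, HasDerivOnK K g x d ∧ |d| < 1 := by
  obtain ⟨hAK, hinv⟩ : A ⊆ K ∧ IsInvariantSet K G A := ⟨hA.2.1, hA.2.2.2.1⟩
  let _ : MulAction G A := hinv.mulAction hAK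
  have hG (g : G) : IsLocallyLogLip (g • · : A → A) :=
    (hdiff g g.2).isLocallyLogLip hAK fun _ ↦ rfl
  have : ContinuousConstSMul G A := ⟨fun g ↦ (hG g).continuous⟩
  have hsmul (g : G) (x : A) : ((g • x : A) : ℝ) = apK K g x := rfl
  have : IsMinimal G A := hA.isMinimal hsmul
  have : CompactSpace A := isCompact_iff_compactSpace.1 hAc
  have : Infinite A := hinf.to_subtype
  have : Group.FG G := (Group.fg_iff_subgroup_fg G).2 hFG
  have : PerfectSpace A := perfectSpace_of_isMinimal G A
  obtain ⟨g, ⟨x, hx⟩, hfix, d, hd, hslope⟩ := exists_contracting_fixedPoint hG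
  have hgx : apK K g x = x := congrArg Subtype.val hfix
  obtain ⟨d', hd'⟩ := (hdiff g g.2).exists_hasDerivOnK (hAK hx)
  have hdd' : d = d' := tendsto_nhds_unique hslope <| by
    simpa only [hsmul, hgx] using hd'.tendsto_subtype hAK hx
  refine ⟨g, g.2, x, hx, ?_, hgx, d', hd', hdd' ▸ hd⟩
  have hacc : AccPt (⟨x, hx⟩ : A) (𝓟 univ) := PerfectSpace.univ_preperfect _ (mem_univ _)
  simpa using hacc.map continuous_subtype_val.continuousAt Subtype.val_injective

/-- Either some element of `G` has a hyperbolic fixed point, or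
every minimal invariant set of the action of `G` on `K` is finite. -/
theorem sacksteder_alternative (K : Set ℝ) (hK : IsCantorInR K)
    (G : Subgroup (Equiv.Perm K))
    (hdiff : ∀ g ∈ G, MemDiffLip K g)
    (hFG : G.FG) :
    (∃ g ∈ G, ∃ x ∈ K, apK K g x = x ∧ ∃ d : ℝ, HasDerivOnK K g x d ∧ |d| ≠ 1) ∨
    (∀ A : Set ℝ, IsMinimalInvariantSet K G A → A.Finite) := by
  refine or_iff_not_imp_left.2 fun h A hA ↦ by_contra fun hinf ↦ h ?_
  obtain ⟨g, hg, x, hx, -, hgx, d, hd, hd1⟩ := sacksteder_alternative_general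
    (fun g hg ↦ (hdiff g hg).2.2) hFG hA (hK.2.1.of_isClosed_subset hA.2.2.1 hA.2.1) hinf
  exact ⟨g, hg, x, hA.2.1 hx, hgx, d, hd, hd1.ne⟩
end

section
/- Let K be a Cantor set in ℝ and let G be a finitely generated periodic subgroup of diff^{1+Lip}(K). Then for every point x ∈ K there exists a G-invariant clopen (in K) neighbourhood U of x such that the group of restrictions to U of the elements of G is finite. -/
open Set

/-!
At a point `x` with finite orbit, a locally increasing element of finite order that fixes `x` is the
identity near `x`, so the elements that are trivial near `x` form a subgroup of finite index. It is
finitely generated, hence fixes a clopen neighbourhood of `x` pointwise, and the translates of this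
neighbourhood make up `U`. It remains to see that every orbit is finite.

Otherwise the points with infinite orbit form a nonempty closed invariant set, which contains a
minimal set `M`. The gaps of `M` have summable lengths, and a generator maps each short gap onto a
gap. There are infinitely many gaps, but only finitely many of them are long, so the generators
connect some gap `u` to infinitely many others through short gaps only. Since log-derivatives are
Lipschitz, the distortion along a path of distinct gaps is at most the exponential of a multiple of
their total length. As in Sacksteder's theorem, one ball around an endpoint of `u` is therefore
mapped into balls no longer than the gaps reached, which are arbitrarily short. Minimality brings
one of these images well inside the original ball, and no element of finite order contracts a ball
in this way.
-/

open Filter Topology Pointwise MulAction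

open scoped Function

section FiniteIndex

variable {Γ X : Type*} [Group Γ] [MulAction Γ X]

theorem finite_range_of_mul_right_invariant {β : Type*} (H : Subgroup Γ) [H.FiniteIndex]
    {φ : Γ → β} (hφ : ∀ g, ∀ h ∈ H, φ (g * h) = φ g) : (range φ).Finite := by
  refine (finite_range fun q : Γ ⧸ H ↦ φ q.out).subset ?_
  rintro _ ⟨g, rfl⟩
  obtain ⟨h, hh⟩ := QuotientGroup.mk_out_eq_mul H g
  exact ⟨g, by simp only [hh, hφ g h h.2]⟩

theorem finite_range_smul_set (V : Set X) [(fixingSubgroup Γ V).FiniteIndex] :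
    (range fun g : Γ ↦ g • V).Finite := by
  refine finite_range_of_mul_right_invariant (fixingSubgroup Γ V) fun g h hh ↦ ?_
  rw [mul_smul, show h • V = V from MulAction.fixingSubgroup_le_stabilizer Γ V hh]

theorem finite_orbit_of_mem {V : Set X} [(fixingSubgroup Γ V).FiniteIndex] {y : X} (hy : y ∈ V) :
    (orbit Γ y).Finite := by
  refine finite_range_of_mul_right_invariant (fixingSubgroup Γ V) fun g h hh ↦ ?_
  rw [mul_smul, (mem_fixingSubgroup_iff Γ).1 hh y hy]

theorem normalCore_fixingSubgroup_le (V : Set X) :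
    (fixingSubgroup Γ V).normalCore ≤ fixingSubgroup Γ (⋃ g : Γ, g • V) := by
  intro n hn
  refine (mem_fixingSubgroup_iff Γ).2 fun y hy ↦ ?_
  obtain ⟨g, z, hz, rfl⟩ := mem_iUnion.1 hy
  have hconj : g⁻¹ * n * g⁻¹⁻¹ ∈ fixingSubgroup Γ V :=
    Subgroup.normalCore_le _ (Subgroup.normalCore_normal _ |>.conj_mem n hn g⁻¹)
  have hfix := (mem_fixingSubgroup_iff Γ).1 hconj z hz
  rwa [inv_inv, mul_smul, mul_smul, inv_smul_eq_iff] at hfix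

theorem smul_mem_iUnion_smul (V : Set X) (g : Γ) {y : X} (hy : y ∈ ⋃ k : Γ, k • V) :
    g • y ∈ ⋃ k : Γ, k • V := by
  obtain ⟨k, z, hz, rfl⟩ := mem_iUnion.1 hy
  exact mem_iUnion.2 ⟨g * k, z, hz, mul_smul g k z⟩

theorem orbit_subset_of_smul_subset {S : Set Γ} (hS : Subgroup.closure S = ⊤) {A : Set X}
    (hA : A.Finite) (hSA : ∀ s ∈ S, s • A ⊆ A) {x : X} (hx : x ∈ A) : orbit Γ x ⊆ A := by
  have hle : Subgroup.closure S ≤ stabilizer Γ A :=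
    (Subgroup.closure_le _).2 fun s hs ↦ (mem_stabilizer_set_iff_smul_set_subset hA).2 (hSA s hs)
  rintro _ ⟨g, rfl⟩
  have hg : g • A = A := hle (hS ▸ Subgroup.mem_top g)
  exact hg ▸ smul_mem_smul_set hx

theorem subset_of_smul_subset_of_isOfFinOrder {g : Γ} (hg : IsOfFinOrder g) {A B : Set X}
    (hAB : A ⊆ B) (hgB : g • B ⊆ A) : B ⊆ A := by
  have hpow : ∀ n : ℕ, g ^ (n + 1) • B ⊆ A := fun n ↦ by
    induction n with
    | zero => simpa only [zero_add, pow_one] using hgB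
    | succ n ih =>
      rw [pow_succ', mul_smul]
      exact (smul_set_mono (ih.trans hAB)).trans hgB
  simpa only [Nat.sub_add_cancel hg.orderOf_pos, pow_orderOf_eq_one, one_smul] using
    hpow (orderOf g - 1)

end FiniteIndex

section Germs

variable {Γ X : Type*} [Group Γ] [MulAction Γ X] [TopologicalSpace X]

variable (Γ) in
/-- The stabilizer of the germ of the identity at `x`: the elements of `Γ` that fix every point of
some neighbourhood of `x`. -/
def germStabilizer (x : X) : Subgroup Γ where
  carrier := {g | ∀ᶠ y in 𝓝 x, g • y = y}
  one_mem' := .of_forall (one_smul Γ)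
  mul_mem' {g h} hg hh := by
    filter_upwards [hg, hh] with y hgy hhy
    rw [mul_smul, hhy, hgy]
  inv_mem' {g} hg := by
    filter_upwards [hg] with y hgy
    rw [inv_smul_eq_iff, hgy]

theorem mem_germStabilizer {x : X} {g : Γ} :
    g ∈ germStabilizer Γ x ↔ ∀ᶠ y in 𝓝 x, g • y = y := Iff.rfl

theorem germStabilizer_le_stabilizer (x : X) : germStabilizer Γ x ≤ stabilizer Γ x :=
  fun _ hg ↦ (mem_germStabilizer.1 hg).self_of_nhds

theorem exists_nhds_germStabilizer_le_fixingSubgroup {x : X} (hfg : (germStabilizer Γ x).FG) :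
    ∃ V ∈ 𝓝 x, germStabilizer Γ x ≤ fixingSubgroup Γ V := by
  obtain ⟨T, hT⟩ := hfg
  have hfix : ∀ᶠ y in 𝓝 x, ∀ t ∈ T, t • y = y :=
    (eventually_all_finset T).2 fun t ht ↦
      mem_germStabilizer.1 (hT.le (Subgroup.subset_closure ht))
  refine ⟨_, hfix, ?_⟩
  nth_rewrite 1 [← hT]
  exact (Subgroup.closure_le _).2 fun t ht ↦ (mem_fixingSubgroup_iff Γ).2 fun y hy ↦ hy t ht

theorem isClopen_iUnion_smul [ContinuousConstSMul Γ X] {V : Set X} (hV : IsClopen V)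
    [(fixingSubgroup Γ V).FiniteIndex] : IsClopen (⋃ g : Γ, g • V) := by
  rw [← sUnion_range, sUnion_eq_biUnion]
  refine (finite_range_smul_set V).isClopen_biUnion ?_
  rintro _ ⟨g, rfl⟩
  exact ⟨hV.1.smul g, hV.2.smul g⟩

theorem exists_isClopen_fixingSubgroup_finiteIndex [T2Space X] [CompactSpace X]
    [TotallyDisconnectedSpace X] [Group.FG Γ] [ContinuousConstSMul Γ X] (x : X)
    [(germStabilizer Γ x).FiniteIndex] :
    ∃ U : Set X, IsClopen U ∧ x ∈ U ∧ (∀ g : Γ, ∀ y ∈ U, g • y ∈ U) ∧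
      (fixingSubgroup Γ U).FiniteIndex := by
  obtain ⟨W, hW, hfix⟩ := exists_nhds_germStabilizer_le_fixingSubgroup (Γ := Γ)
    ((Group.fg_iff_subgroup_fg (germStabilizer Γ x)).1 inferInstance)
  obtain ⟨O, hOW, hO, hxO⟩ := mem_nhds_iff.1 hW
  obtain ⟨V, hV, hxV, hVO⟩ := compact_exists_isClopen_in_isOpen hO hxO
  have : (fixingSubgroup Γ V).FiniteIndex :=
    Subgroup.finiteIndex_of_le (hfix.trans (fixingSubgroup_antitone Γ X (hVO.trans hOW)))
  exact ⟨⋃ g : Γ, g • V, isClopen_iUnion_smul hV, mem_iUnion.2 ⟨1, by rwa [one_smul]⟩,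
    fun g _ ↦ smul_mem_iUnion_smul V g,
    Subgroup.finiteIndex_of_le (normalCore_fixingSubgroup_le V)⟩

end Germs

section StrictMonotoneNear

/-- `f` is strictly increasing or strictly decreasing on some neighbourhood of `x`. -/
def StrictMonotoneNear {X Y : Type*} [TopologicalSpace X] [Preorder X] [Preorder Y] (f : X → Y)
    (x : X) : Prop :=
  ∃ V ∈ 𝓝 x, StrictMonoOn f V ∨ StrictAntiOn f V

variable {Γ X : Type*} [Group Γ] [LinearOrder X] [TopologicalSpace X] [MulAction Γ X]
  [ContinuousConstSMul Γ X] {x : X}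

theorem mem_germStabilizer_of_strictMonoOn {g : Γ} (hg : IsOfFinOrder g) (hx : g • x = x)
    {V : Set X} (hV : V ∈ 𝓝 x) (hmono : StrictMonoOn (g • · : X → X) V) :
    g ∈ germStabilizer Γ x := by
  let W : Set X := {y | ∀ h ∈ Submonoid.powers g, h • y ∈ V}
  have hW : W ∈ 𝓝 x := by
    refine (eventually_all_finite hg.finite_powers).2 fun h hh ↦ ?_
    have hhx : h • x = x := (Submonoid.powers_le (P := (stabilizer Γ x).toSubmonoid)).2 hx hh
    exact (continuous_const_smul h).continuousAt.eventually_mem (by rwa [hhx])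
  have hmaps : MapsTo (g • ·) W W := fun y hy h hh ↦ by
    rw [smul_smul]
    exact hy _ (mul_mem hh (Submonoid.mem_powers g))
  have hWV : W ⊆ V := fun y hy ↦ by simpa only [one_smul] using hy 1 (one_mem _)
  have hmonoW : StrictMono hmaps.restrict := fun y z hyz ↦ hmono (hWV y.2) (hWV z.2) hyz
  filter_upwards [hW] with y hy
  have hperiodic : hmaps.restrict^[orderOf g] ⟨y, hy⟩ = id^[orderOf g] ⟨y, hy⟩ := Subtype.ext <| by
    simp only [hmaps.coe_iterate_restrict, smul_iterate, pow_orderOf_eq_one, one_smul,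
      Function.iterate_id, id]
  have hcomm : Function.Commute hmaps.restrict id := .id_right
  exact congrArg Subtype.val <| (hcomm.iterate_pos_eq_iff_map_eq hmonoW.monotone strictMono_id
    hg.orderOf_pos).1 hperiodic

theorem exists_strictAntiOn_of_notMem_germStabilizer {g : Γ} (hg : IsOfFinOrder g) (hx : g • x = x)
    (hmono : StrictMonotoneNear (g • · : X → X) x) (hgx : g ∉ germStabilizer Γ x) :
    ∃ V ∈ 𝓝 x, StrictAntiOn (g • · : X → X) V := by
  obtain ⟨V, hV, hinc | hdec⟩ := hmono
  · exact absurd (mem_germStabilizer_of_strictMonoOn hg hx hV hinc) hgx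
  · exact ⟨V, hV, hdec⟩

theorem relIndex_germStabilizer_dvd_two (htors : IsMulTorsion Γ)
    (hmono : ∀ g : Γ, StrictMonotoneNear (g • · : X → X) x) :
    (germStabilizer Γ x).relIndex (stabilizer Γ x) ∣ 2 := by
  by_cases hle : stabilizer Γ x ≤ germStabilizer Γ x
  · exact Subgroup.relIndex_eq_one.2 hle ▸ one_dvd 2
  obtain ⟨a, hax, ha⟩ := SetLike.not_le_iff_exists.1 hle
  refine Subgroup.relIndex_dvd_two_iff.2 ⟨a, hax, fun b hbx ↦ or_iff_not_imp_right.2 fun hb ↦ ?_⟩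
  obtain ⟨V, hV, hVa⟩ := exists_strictAntiOn_of_notMem_germStabilizer (htors a) hax (hmono a) ha
  obtain ⟨W, hW, hWb⟩ := exists_strictAntiOn_of_notMem_germStabilizer (htors b) hbx (hmono b) hb
  have haW : (a • · : X → X) ⁻¹' W ∈ 𝓝 x :=
    (continuous_const_smul a).continuousAt.preimage_mem_nhds
      (by rwa [show a • x = x from hax])
  refine mem_germStabilizer_of_strictMonoOn (htors _) (mul_mem hbx hax) (inter_mem hV haW)
    fun y hy z hz hyz ↦ ?_
  simp only [mul_smul]
  exact hWb hz.2 hy.2 (hVa hy.1 hz.1 hyz)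

theorem germStabilizer_finiteIndex (htors : IsMulTorsion Γ)
    (hmono : ∀ g : Γ, StrictMonotoneNear (g • · : X → X) x) (hx : (orbit Γ x).Finite) :
    (germStabilizer Γ x).FiniteIndex := by
  have hindex : (stabilizer Γ x).index ≠ 0 := by
    rw [index_stabilizer]
    exact ((ncard_pos hx).2 (nonempty_orbit x)).ne'
  rw [Subgroup.finiteIndex_iff, ← Subgroup.relIndex_mul_index (germStabilizer_le_stabilizer x)]
  exact mul_ne_zero
    (ne_zero_of_dvd_ne_zero two_ne_zero (relIndex_germStabilizer_dvd_two htors hmono)) hindex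

theorem exists_isClopen_fixingSubgroup_finiteIndex_of_finite_orbit [T2Space X] [CompactSpace X]
    [TotallyDisconnectedSpace X] [Group.FG Γ] (htors : IsMulTorsion Γ)
    (hmono : ∀ g : Γ, StrictMonotoneNear (g • · : X → X) x) (hx : (orbit Γ x).Finite) :
    ∃ U : Set X, IsClopen U ∧ x ∈ U ∧ (∀ g : Γ, ∀ y ∈ U, g • y ∈ U) ∧
      (fixingSubgroup Γ U).FiniteIndex :=
  have := germStabilizer_finiteIndex htors hmono hx
  exists_isClopen_fixingSubgroup_finiteIndex x

end StrictMonotoneNear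

section RelativeDistance

/-- The distance from `y` to the base point `u.1` of the pair `u`, measured in units of the length
`dist u.1 u.2` of that pair; it is `0` for pairs of length `0`. -/
noncomputable def relDist {X : Type*} [Dist X] (u : X × X) (y : X) : ℝ :=
  dist y u.1 / dist u.1 u.2

/-- Seen from `u` in the source and from `v` in the target, `f` expands relative distances by at
most the factor `D`, as long as the points stay within relative distance `1` after this expansion.
The proviso is what makes the notion stable under composition. -/
def DistortionLE {X Y : Type*} [Dist X] [Dist Y] (f : X → Y) (D : ℝ) (u : X × X) (v : Y × Y) :
    Prop :=
  ∀ y, D * relDist u y ≤ 1 → relDist v (f y) ≤ D * relDist u y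

theorem relDist_nonneg {X : Type*} [PseudoMetricSpace X] (u : X × X) (y : X) : 0 ≤ relDist u y :=
  div_nonneg dist_nonneg dist_nonneg

theorem DistortionLE.comp {X Y Z : Type*} [PseudoMetricSpace X] [Dist Y] [Dist Z] {f : X → Y}
    {g : Y → Z} {D E : ℝ} {u : X × X} {v : Y × Y} {w : Z × Z} (hg : DistortionLE g E v w)
    (hf : DistortionLE f D u v) (hD : 0 ≤ D) (hE : 1 ≤ E) : DistortionLE (g ∘ f) (E * D) u w := by
  intro y hy
  rw [mul_assoc] at hy ⊢
  have hfy := hf y <| (le_mul_of_one_le_left (mul_nonneg hD (relDist_nonneg u y)) hE).trans hy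
  have hgy := mul_le_mul_of_nonneg_left hfy (zero_le_one.trans hE)
  exact (hg (f y) (hgy.trans hy)).trans hgy

theorem dist_le_of_mul_relDist_le_one {X : Type*} [MetricSpace X] {u : X × X} {y : X} {D : ℝ}
    (hu : u.1 ≠ u.2) (hD : 1 ≤ D) (h : D * relDist u y ≤ 1) : dist y u.1 ≤ dist u.1 u.2 :=
  (div_le_one (dist_pos.2 hu)).1 ((le_mul_of_one_le_left (relDist_nonneg u y) hD).trans h)

theorem exists_dist_eq_abs_deriv_mul_dist {F F' : ℝ → ℝ} {p y : ℝ}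
    (hF : ∀ t ∈ uIcc p y, HasDerivAt F (F' t) t) :
    ∃ t ∈ uIcc p y, dist (F y) (F p) = |F' t| * dist y p := by
  wlog hpy : p < y generalizing p y
  · obtain rfl | hyp := (not_lt.1 hpy).eq_or_lt
    · exact ⟨y, left_mem_uIcc, by simp only [dist_self, mul_zero]⟩
    · obtain ⟨t, ht, hdist⟩ := this (uIcc_comm p y ▸ hF) hyp
      exact ⟨t, uIcc_comm p y ▸ ht, by rw [dist_comm, hdist, dist_comm p]⟩
  rw [uIcc_of_le hpy.le] at hF ⊢
  obtain ⟨t, ht, hslope⟩ := exists_hasDerivAt_eq_slope F F' hpy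
    (fun t ht ↦ (hF t ht).continuousAt.continuousWithinAt)
    (fun t ht ↦ hF t (Ioo_subset_Icc_self ht))
  refine ⟨t, Ioo_subset_Icc_self ht, ?_⟩
  rw [Real.dist_eq, Real.dist_eq, ← abs_mul, hslope, div_mul_cancel₀ _ (sub_pos.2 hpy).ne']

theorem relDist_map_le {F F' : ℝ → ℝ} {s : Set ℝ} [OrdConnected s] {C : NNReal}
    (hF : ∀ t ∈ s, HasDerivAt F (F' t) t ∧ F' t ≠ 0)
    (hC : LipschitzOnWith C (fun t ↦ Real.log |F' t|) s) {p y z : ℝ} (hp : p ∈ s) (hy : y ∈ s)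
    (hz : z ∈ s) :
    relDist (F p, F z) (F y) ≤ Real.exp (C * (dist y p + dist p z)) * relDist (p, z) y := by
  have hpy : uIcc p y ⊆ s := OrdConnected.uIcc_subset ‹_› hp hy
  have hpz : uIcc p z ⊆ s := OrdConnected.uIcc_subset ‹_› hp hz
  obtain ⟨t, ht, hFy⟩ := exists_dist_eq_abs_deriv_mul_dist fun t ht ↦ (hF t (hpy ht)).1
  obtain ⟨u, hu, hFz⟩ := exists_dist_eq_abs_deriv_mul_dist fun t ht ↦ (hF t (hpz ht)).1
  have hlog : Real.log |F' t| - Real.log |F' u| ≤ C * (dist y p + dist p z) := calc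
    _ ≤ C * dist t u := (le_abs_self _).trans (hC.dist_le_mul t (hpy ht) u (hpz hu))
    _ ≤ C * (dist y p + dist p z) := by
      gcongr
      calc dist t u ≤ dist t p + dist p u := dist_triangle t p u
        _ ≤ dist y p + dist p z := by
          rw [dist_comm t, dist_comm y]
          exact add_le_add (Real.dist_left_le_of_mem_uIcc ht) (Real.dist_left_le_of_mem_uIcc hu)
  have hslopes : |F' t| / |F' u| ≤ Real.exp (C * (dist y p + dist p z)) := by
    rw [← Real.exp_log (abs_pos.2 (hF t (hpy ht)).2), ← Real.exp_log (abs_pos.2 (hF u (hpz hu)).2),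
      ← Real.exp_sub]
    exact Real.exp_le_exp.2 hlog
  calc relDist (F p, F z) (F y) = |F' t| / |F' u| * relDist (p, z) y := by
        rw [relDist, relDist, hFy, dist_comm (F p), hFz, dist_comm z, mul_div_mul_comm]
    _ ≤ _ := mul_le_mul_of_nonneg_right hslopes (relDist_nonneg _ _)

end RelativeDistance

section Tame

/-- At scale `ε` around `p`, the map `f` has distortion controlled by the constant `ε⁻¹` and
reflects betweenness. A single parameter serves for both the scale and the constant, so that any
map tame at some scale is tame at all smaller ones. -/
structure TameAt {X : Type*} [MetricSpace X] [LinearOrder X] (f : X → X) (ε : ℝ) (p : X) :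
    Prop where
  distortionLE {z : X} : dist p z < ε →
    DistortionLE f (Real.exp (ε⁻¹ * dist p z)) (p, z) (f p, f z)
  mem_uIoo {z w : X} : dist p z < ε → f w ∈ uIoo (f p) (f z) → w ∈ uIoo p z

theorem eventually_mem_and_ball_subset {X : Type*} [PseudoMetricSpace X] {x : X} {V : Set X}
    (hV : V ∈ 𝓝 x) : ∀ᶠ q in 𝓝[>] (0 : ℝ) ×ˢ 𝓝 x, q.2 ∈ V ∧ Metric.ball q.2 q.1 ⊆ V := by
  obtain ⟨r, hr, hrV⟩ := Metric.mem_nhds_iff.1 hV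
  have hε : ∀ᶠ ε in 𝓝[>] (0 : ℝ), ε < r / 2 := nhdsWithin_le_nhds (Iio_mem_nhds (half_pos hr))
  filter_upwards [hε.prod_mk (Metric.ball_mem_nhds x (half_pos hr)),
    tendsto_snd.eventually_mem hV] with ⟨ε, p⟩ ⟨hεr, hpr⟩ hpV
  refine ⟨hpV, (Metric.ball_subset_ball' ?_).trans hrV⟩
  exact (add_lt_add hεr hpr).le.trans_eq (add_halves r)

theorem eventually_distortionLE {X : Type*} [MetricSpace X] {f : X → X} {x : X} {V : Set X}
    (hV : V ∈ 𝓝 x) {C : NNReal} (hC : ∀ p ∈ V, ∀ y ∈ V, ∀ z ∈ V,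
      relDist (f p, f z) (f y) ≤ Real.exp (C * (dist y p + dist p z)) * relDist (p, z) y) :
    ∀ᶠ q in 𝓝[>] (0 : ℝ) ×ˢ 𝓝 x, ∀ z, dist q.2 z < q.1 →
      DistortionLE f (Real.exp (q.1⁻¹ * dist q.2 z)) (q.2, z) (f q.2, f z) := by
  have hε : ∀ᶠ ε in 𝓝[>] (0 : ℝ), 0 < ε ∧ (2 * C : ℝ) ≤ ε⁻¹ :=
    eventually_mem_nhdsWithin.and (tendsto_inv_nhdsGT_zero.eventually_ge_atTop (2 * C : ℝ))
  filter_upwards [eventually_mem_and_ball_subset hV, tendsto_fst.eventually hε] with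
    ⟨ε, p⟩ ⟨hpV, hball⟩ ⟨hε0, hCε⟩ z hz y hy
  obtain rfl | hpz := eq_or_ne p z
  · simp only [relDist, dist_self, div_zero, mul_zero, le_refl]
  have hexp : 1 ≤ Real.exp (ε⁻¹ * dist p z) := Real.one_le_exp (by positivity)
  have hyp : dist y p ≤ dist p z := dist_le_of_mul_relDist_le_one hpz hexp hy
  refine (hC p hpV y (hball (hyp.trans_lt hz)) z (hball (Metric.mem_ball'.2 hz))).trans ?_
  refine mul_le_mul_of_nonneg_right (Real.exp_le_exp.2 ?_) (relDist_nonneg _ y)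
  have hsum : dist y p + dist p z ≤ 2 * dist p z := by linarith
  calc C * (dist y p + dist p z) ≤ C * (2 * dist p z) := by gcongr
    _ = 2 * C * dist p z := by ring
    _ ≤ ε⁻¹ * dist p z := by gcongr

variable {K : Set ℝ}

theorem eventually_mem_uIoo_of_map_mem_uIoo {f : K → K} {x : K} (hf : IsInducing f)
    (hmono : StrictMonotoneNear f x) :
    ∀ᶠ q in 𝓝[>] (0 : ℝ) ×ˢ 𝓝 x, ∀ z w, dist q.2 z < q.1 →
      f w ∈ uIoo (f q.2) (f z) → w ∈ uIoo q.2 z := by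
  obtain ⟨V, hV, hVmono⟩ := hmono
  obtain ⟨ρ, hρ, hρV⟩ := (hf.basis_nhds Metric.nhds_basis_ball).mem_iff.1 hV
  have hball : (Metric.ball (f x) ρ).OrdConnected := by
    have : (Metric.ball (f x : ℝ) ρ).OrdConnected := (convex_ball _ _).ordConnected
    exact this.preimage_mono (Subtype.mono_coe K)
  filter_upwards [eventually_mem_and_ball_subset (hf.continuous.continuousAt.preimage_mem_nhds
    (Metric.ball_mem_nhds (f x) hρ))] with ⟨ε, p⟩ ⟨hp, hsub⟩ z w hz hw
  have hzρ : f z ∈ Metric.ball (f x) ρ := hsub (Metric.mem_ball'.2 hz)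
  have hwV : w ∈ V := hρV (hball.uIcc_subset hp hzρ (uIoo_subset_uIcc_self hw))
  have hpV := hρV hp
  have hzV := hρV hzρ
  rw [uIoo_eq_union] at hw ⊢
  obtain h | h := hVmono
  · exact hw.imp (.imp (h.lt_iff_lt hpV hwV).1 (h.lt_iff_lt hwV hzV).1)
      (.imp (h.lt_iff_lt hzV hwV).1 (h.lt_iff_lt hwV hpV).1)
  · exact hw.symm.imp (fun h' ↦ ⟨(h.lt_iff_gt hwV hpV).1 h'.2, (h.lt_iff_gt hzV hwV).1 h'.1⟩)
      (fun h' ↦ ⟨(h.lt_iff_gt hwV hzV).1 h'.2, (h.lt_iff_gt hpV hwV).1 h'.1⟩)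

theorem apK_coe (f : Equiv.Perm K) (x : K) : apK K f x = f x :=
  dif_pos x.2

theorem IsD1Lip.strictMonotoneNear {f : Equiv.Perm K} (hf : IsD1Lip K f) (x : K) :
    StrictMonotoneNear f x := by
  obtain ⟨a, b, hx, F, F', hF, -, hinj, -, hFf⟩ := hf x
  have hcoe : ∀ y : K, (y : ℝ) ∈ Ioo a b → F y = f y := fun y hy ↦ by
    rw [hFf y hy y.2, apK_coe]
  refine ⟨(↑) ⁻¹' Ioo a b, continuousAt_subtype_val.preimage_mem_nhds (Ioo_mem_nhds hx.1 hx.2), ?_⟩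
  have hcont : ContinuousOn F (Ioo a b) := fun t ht ↦ (hF t ht).1.continuousAt.continuousWithinAt
  refine (hcont.strictMonoOn_of_injOn_Ioo (hx.1.trans hx.2) hinj).imp ?_ ?_ <;>
  · intro h y hy z hz hyz
    rw [← Subtype.coe_lt_coe, ← hcoe y hy, ← hcoe z hz]
    exact h hy hz hyz

theorem IsD1Lip.exists_nhds_relDist_le {f : Equiv.Perm K} (hf : IsD1Lip K f) (x : K) :
    ∃ V ∈ 𝓝 x, ∃ C : NNReal, ∀ p ∈ V, ∀ y ∈ V, ∀ z ∈ V,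
      relDist (f p, f z) (f y) ≤ Real.exp (C * (dist y p + dist p z)) * relDist (p, z) y := by
  obtain ⟨a, b, hx, F, F', hF, -, -, ⟨C, hC⟩, hFf⟩ := hf x
  have hcoe : ∀ y : K, (y : ℝ) ∈ Ioo a b → F y = f y := fun y hy ↦ by
    rw [hFf y hy y.2, apK_coe]
  refine ⟨(↑) ⁻¹' Ioo a b, continuousAt_subtype_val.preimage_mem_nhds (Ioo_mem_nhds hx.1 hx.2), C,
    fun p hp y hy z hz ↦ ?_⟩
  have hle := relDist_map_le hF hC hp hy hz
  rwa [hcoe p hp, hcoe y hy, hcoe z hz] at hle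

theorem MemDiffLip.eventually_tameAt_nhds {f : Equiv.Perm K} (hf : MemDiffLip K f) (x : K) :
    ∀ᶠ q in 𝓝[>] (0 : ℝ) ×ˢ 𝓝 x, TameAt f q.1 q.2 := by
  obtain ⟨hcont, hcont_symm, hD1⟩ := hf
  obtain ⟨V, hV, C, hC⟩ := hD1.exists_nhds_relDist_le x
  let F : K ≃ₜ K := ⟨f, hcont, hcont_symm⟩
  filter_upwards [eventually_distortionLE hV hC,
    eventually_mem_uIoo_of_map_mem_uIoo F.isInducing (hD1.strictMonotoneNear x)] with q hdist hbtw
  exact ⟨hdist _, hbtw _ _⟩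

theorem MemDiffLip.eventually_tameAt [CompactSpace K] {f : Equiv.Perm K} (hf : MemDiffLip K f) :
    ∀ᶠ ε in 𝓝[>] (0 : ℝ), ∀ p : K, TameAt f ε p := by
  have hprod : ∀ᶠ q in 𝓝[>] (0 : ℝ) ×ˢ (⊤ : Filter K), TameAt f q.1 q.2 := by
    rw [← nhdsSet_univ]
    exact isCompact_univ.mem_prod_nhdsSet_of_forall fun x _ ↦ hf.eventually_tameAt_nhds x
  exact mem_prod_top.1 hprod

end Tame

section Gaps

/-- The bounded gaps of `M`: the pairs of endpoints, in either order, of the bounded components of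
the complement of `M`. The first component of a pair serves as the base point of `relDist`. -/
def gaps {X : Type*} [LinearOrder X] (M : Set X) : Set (X × X) :=
  {w | w.1 ∈ M ∧ w.2 ∈ M ∧ w.1 ≠ w.2 ∧ Disjoint (uIoo w.1 w.2) M}

section Order

variable {X : Type*} [LinearOrder X] {M : Set X}

theorem swap_mem_gaps {w : X × X} (hw : w ∈ gaps M) : w.swap ∈ gaps M :=
  ⟨hw.2.1, hw.1, hw.2.2.1.symm, uIoo_comm w.1 w.2 ▸ hw.2.2.2⟩

theorem le_or_le_of_mem_gaps {v w : X × X} (hv : v ∈ gaps M) (hw : w ∈ gaps M) (hv' : v.1 < v.2)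
    (hw' : w.1 < w.2) (hne : v ≠ w) : v.2 ≤ w.1 ∨ w.2 ≤ v.1 := by
  by_contra! hoverlap
  have hdv := hv.2.2.2
  have hdw := hw.2.2.2
  rw [uIoo_of_lt hv', Set.disjoint_right] at hdv
  rw [uIoo_of_lt hw', Set.disjoint_right] at hdw
  refine hne (Prod.ext (le_antisymm ?_ ?_) (le_antisymm ?_ ?_)) <;> refine le_of_not_gt fun h ↦ ?_
  · exact hdw hv.1 ⟨h, hoverlap.2⟩
  · exact hdv hw.1 ⟨h, hoverlap.1⟩
  · exact hdv hw.2.1 ⟨hoverlap.2, h⟩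
  · exact hdw hv.2.1 ⟨hoverlap.1, h⟩

theorem exists_gap_between [TopologicalSpace X] [ClosedIicTopology X] [ClosedIciTopology X]
    (hM : IsCompact M) {A : Set X} (hA : IsClopen A) (hlower : IsLowerSet A) {x y : X}
    (hx : x ∈ M) (hy : y ∈ M) (hxA : x ∈ A) (hyA : y ∉ A) :
    ∃ w ∈ gaps M, x ≤ w.1 ∧ w.1 < w.2 ∧ w.2 ≤ y := by
  obtain ⟨a, ⟨haM, haA⟩, ha⟩ := (hM.inter_right hA.1).exists_isGreatest ⟨x, hx, hxA⟩
  obtain ⟨b, ⟨hbM, hbA⟩, hb⟩ := (hM.inter_right hA.compl.1).exists_isLeast ⟨y, hy, hyA⟩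
  have hab : a < b := lt_of_not_ge fun hba ↦ hbA (hlower hba haA)
  refine ⟨(a, b), ⟨haM, hbM, hab.ne, ?_⟩, ha ⟨hx, hxA⟩, hab, hb ⟨hy, hyA⟩⟩
  rw [uIoo_of_lt hab, Set.disjoint_left]
  intro c hc hcM
  by_cases hcA : c ∈ A
  · exact (ha ⟨hcM, hcA⟩).not_gt hc.1
  · exact (hb ⟨hcM, hcA⟩).not_gt hc.2

theorem infinite_gaps_of_forall_exists_between
    (hM : ∀ x ∈ M, ∀ y ∈ M, x < y → ∃ w ∈ gaps M, x ≤ w.1 ∧ w.1 < w.2 ∧ w.2 ≤ y)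
    (hinf : M.Infinite) : (gaps M).Infinite := by
  intro hfin
  let below : X → Set (X × X) := fun x ↦ {w ∈ gaps M | w.2 ≤ x}
  have hrange : (below '' M).Finite :=
    hfin.finite_subsets.subset (image_subset_iff.2 fun x _ ↦ sep_subset _ _)
  have hne : ∀ x ∈ M, ∀ y ∈ M, x < y → below x ≠ below y := fun x hx y hy hxy heq ↦ by
    obtain ⟨w, hw, hxw, hlt, hwy⟩ := hM x hx y hy hxy
    have hwx : w ∈ below x := heq ▸ ⟨hw, hwy⟩
    exact (hxw.trans_lt hlt).not_ge hwx.2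
  refine hinf (hrange.of_finite_image fun x hx y hy heq ↦ ?_)
  obtain hlt | rfl | hlt := lt_trichotomy x y
  · exact absurd heq (hne x hx y hy hlt)
  · rfl
  · exact absurd heq.symm (hne y hy x hx hlt)

end Order

theorem summable_sub_of_pairwise_disjoint_Ioo {ι : Type*} {a b : ι → ℝ} (hab : ∀ i, a i ≤ b i)
    {m n : ℝ} (hmn : ∀ i, Ioo (a i) (b i) ⊆ Ioo m n)
    (hdisj : Pairwise (Disjoint on fun i ↦ Ioo (a i) (b i))) : Summable fun i ↦ b i - a i := by
  have hmeas : ∑' i, ENNReal.ofReal (b i - a i) ≤ ENNReal.ofReal (n - m) := by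
    simp only [← Real.volume_Ioo]
    exact (MeasureTheory.tsum_meas_le_meas_iUnion_of_disjoint _ (fun _ ↦ measurableSet_Ioo)
      hdisj).trans (MeasureTheory.measure_mono (iUnion_subset hmn))
  have hsum := ENNReal.summable_toReal (hmeas.trans_lt ENNReal.ofReal_lt_top).ne
  simpa only [ENNReal.toReal_ofReal (sub_nonneg.2 (hab _))] using hsum

variable {K : Set ℝ} {M : Set K}

theorem summable_dist_of_injective_of_mem_gaps (hK : IsCompact K) {ι : Type*} {w : ι → K × K}
    (hinj : Function.Injective w) (hw : ∀ i, w i ∈ gaps M) (hlt : ∀ i, (w i).1 < (w i).2) :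
    Summable fun i ↦ dist (w i).1 (w i).2 := by
  have hdist : ∀ i, dist (w i).1 (w i).2 = (w i).2 - (w i).1 := fun i ↦ by
    rw [dist_comm, Subtype.dist_eq, Real.dist_eq]
    exact abs_of_pos (sub_pos.2 (hlt i))
  obtain ⟨m, hm⟩ := hK.bddBelow
  obtain ⟨n, hn⟩ := hK.bddAbove
  simp only [hdist]
  refine summable_sub_of_pairwise_disjoint_Ioo (fun i ↦ (hlt i).le)
    (fun i ↦ Ioo_subset_Ioo (hm (w i).1.2) (hn (w i).2.2)) fun i j hij ↦ ?_
  rw [Function.onFun, Set.Ioo_disjoint_Ioo]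
  obtain h | h := le_or_le_of_mem_gaps (hw i) (hw j) (hlt i) (hlt j) (hinj.ne hij)
  · exact (min_le_left _ _).trans (le_max_of_le_right h)
  · exact (min_le_right _ _).trans (le_max_of_le_left h)

theorem summable_dist_gaps (hK : IsCompact K) : Summable fun w : gaps M ↦ dist w.1.1 w.1.2 := by
  refine (summable_subtype_and_compl (s := {w : gaps M | w.1.1 < w.1.2})).1 ⟨?_, ?_⟩
  · exact summable_dist_of_injective_of_mem_gaps hK
      (Subtype.val_injective.comp Subtype.val_injective) (fun w ↦ w.1.2) fun w ↦ w.2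
  · refine (summable_dist_of_injective_of_mem_gaps hK
      (Prod.swap_injective.comp (Subtype.val_injective.comp Subtype.val_injective))
      (fun w ↦ swap_mem_gaps w.1.2) fun w ↦ ?_).congr fun w ↦ dist_comm _ _
    exact lt_of_le_of_ne (not_lt.1 w.2) w.1.2.2.2.1.symm

theorem infinite_gaps (hK : IsTotallyDisconnected K) (hM : IsCompact M)
    (hinf : M.Infinite) : (gaps M).Infinite := by
  refine infinite_gaps_of_forall_exists_between (fun x hx y hy hxy ↦ ?_) hinf
  obtain ⟨t, ht, htK⟩ : ∃ t ∈ Icc (x : ℝ) y, t ∉ K := not_subset.1 fun hsub ↦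
    hxy.ne (Subtype.ext (hK _ hsub isPreconnected_Icc (left_mem_Icc.2 hxy.le)
      (right_mem_Icc.2 hxy.le)))
  have hpre : {c : K | (c : ℝ) ≤ t} = {c : K | (c : ℝ) < t} := by
    ext c
    exact (ne_of_mem_of_not_mem c.2 htK).le_iff_lt
  refine exists_gap_between hM (A := {c : K | (c : ℝ) ≤ t}) ⟨?_, ?_⟩ ?_ hx hy ht.1 ?_
  · exact isClosed_Iic.preimage continuous_subtype_val
  · exact hpre ▸ isOpen_Iio.preimage continuous_subtype_val
  · exact (isLowerSet_Iic t).preimage (Subtype.mono_coe K)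
  · exact fun h ↦ htK (le_antisymm h ht.2 ▸ y.2)

end Gaps

section MinimalSets

variable {Γ X : Type*} [Group Γ] [MulAction Γ X] [TopologicalSpace X] {M : Set X} {x : X}

variable (Γ) in
/-- `M` is a minimal set of the action of `Γ`: a nonempty closed invariant set without proper
nonempty closed invariant subsets, encoded as a nonempty set equal to the closure of the orbit of
each of its points. -/
def IsMinimalSet (M : Set X) : Prop :=
  M.Nonempty ∧ ∀ x ∈ M, closure (orbit Γ x) = M

theorem IsMinimalSet.isClosed (hM : IsMinimalSet Γ M) : IsClosed M := by
  obtain ⟨⟨x, hx⟩, hclosure⟩ := hM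
  exact hclosure x hx ▸ isClosed_closure

theorem IsMinimalSet.orbit_subset (hM : IsMinimalSet Γ M) (hx : x ∈ M) : orbit Γ x ⊆ M :=
  subset_closure.trans (hM.2 x hx).subset

theorem IsMinimalSet.smul_mem (hM : IsMinimalSet Γ M) (g : Γ) (hx : x ∈ M) : g • x ∈ M :=
  hM.orbit_subset hx (mem_orbit x g)

theorem IsMinimalSet.subset_of_isClosed (hM : IsMinimalSet Γ M) {A : Set X} (hA : IsClosed A)
    (hinv : ∀ g : Γ, ∀ y ∈ A, g • y ∈ A) (hxM : x ∈ M) (hxA : x ∈ A) : M ⊆ A := by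
  rw [← hM.2 x hxM]
  refine closure_minimal ?_ hA
  rintro _ ⟨g, rfl⟩
  exact hinv g x hxA

theorem smul_mem_closure_orbit [ContinuousConstSMul Γ X] (g : Γ) {y : X}
    (hy : y ∈ closure (orbit Γ x)) : g • y ∈ closure (orbit Γ x) :=
  map_mem_closure (continuous_const_smul g) hy fun _ ↦ mem_orbit_of_mem_orbit g

theorem exists_isMinimalSet_subset [CompactSpace X] [ContinuousConstSMul Γ X] {B : Set X}
    (hB : IsClosed B) (hne : B.Nonempty) (hinv : ∀ g : Γ, ∀ x ∈ B, g • x ∈ B) :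
    ∃ M ⊆ B, IsMinimalSet Γ M := by
  let 𝒜 : Set (Set X) := {A | IsClosed A ∧ A.Nonempty ∧ ∀ g : Γ, ∀ x ∈ A, g • x ∈ A}
  have hchain : ∀ c ⊆ 𝒜, IsChain (· ⊆ ·) c → c.Nonempty → ∃ A ∈ 𝒜, ∀ A' ∈ c, A ⊆ A' := by
    intro c hc hchain hcne
    have : Nonempty c := hcne.to_subtype
    refine ⟨⋂₀ c, ⟨isClosed_sInter fun A hA ↦ (hc hA).1, ?_, ?_⟩, fun A ↦ sInter_subset_of_mem⟩
    · exact IsCompact.nonempty_sInter_of_directed_nonempty_isCompact_isClosed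
        (fun A hA A' hA' ↦ (hchain.total hA hA').elim (fun h ↦ ⟨A, hA, le_rfl, h⟩)
          fun h ↦ ⟨A', hA', h, le_rfl⟩)
        (fun A hA ↦ (hc hA).2.1) (fun A hA ↦ (hc hA).1.isCompact) fun A hA ↦ (hc hA).1
    · exact fun g x hx A hA ↦ (hc hA).2.2 g x (hx A hA)
  obtain ⟨M, hMB, hM⟩ := zorn_superset_nonempty 𝒜 hchain B ⟨hB, hne, hinv⟩
  obtain ⟨hMclosed, hMne, hMinv⟩ := hM.prop
  refine ⟨M, hMB, hMne, fun x hx ↦ ?_⟩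
  have hclosure : closure (orbit Γ x) ⊆ M :=
    closure_minimal (range_subset_iff.2 (hMinv · x hx)) hMclosed
  exact (hM.eq_of_subset ⟨isClosed_closure, (nonempty_orbit x).closure, fun g _ ↦
    smul_mem_closure_orbit g⟩ hclosure)

theorem IsMinimalSet.accPt [T1Space X] [CompactSpace X] [ContinuousConstSMul Γ X]
    (hM : IsMinimalSet Γ M) (hinf : M.Infinite) (hx : x ∈ M) : AccPt x (𝓟 M) := by
  obtain ⟨p, hpM, hp⟩ := hinf.exists_accPt_of_subset_isCompact hM.isClosed.isCompact Subset.rfl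
  refine hM.subset_of_isClosed (isClosed_derivedSet M) (fun g y hy ↦ ?_) hpM hp hx
  have hmap : AccPt (g • y) (map (g • ·) (𝓟 M)) :=
    AccPt.map hy (continuous_const_smul g).continuousAt (MulAction.injective g)
  refine hmap.mono ?_
  rw [map_principal, le_principal_iff, mem_principal]
  exact image_subset_iff.2 fun z hz ↦ hM.smul_mem g hz

end MinimalSets

section GapGraph

variable {Γ X : Type*} [Group Γ] [MetricSpace X] [LinearOrder X] [MulAction Γ X] {M : Set X} {ε : ℝ}

variable (X) in
/-- Both `g` and its inverse act on `X` by maps that are tame at scale `ε` around every point. -/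
def IsTame (ε : ℝ) (g : Γ) : Prop :=
  ∀ p : X, TameAt (g • ·) ε p ∧ TameAt (g⁻¹ • ·) ε p

theorem IsTame.inv {g : Γ} (hg : IsTame X ε g) : IsTame X ε g⁻¹ :=
  fun p ↦ ⟨(hg p).2, by simpa only [inv_inv] using (hg p).1⟩

/-- The gaps of `M` of length less than `ε`, on which tameness at scale `ε` gives control. -/
def smallGaps (M : Set X) (ε : ℝ) : Set (X × X) :=
  {w ∈ gaps M | dist w.1 w.2 < ε}

theorem smul_mem_gaps (hM : ∀ g : Γ, ∀ x ∈ M, g • x ∈ M) {g : Γ} (hg : IsTame X ε g) {w : X × X}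
    (hw : w ∈ smallGaps M ε) : g • w ∈ gaps M := by
  refine ⟨hM g _ hw.1.1, hM g _ hw.1.2.1, fun h ↦ hw.1.2.2.1 (smul_left_cancel g h),
    Set.disjoint_left.2 fun c hc hcM ↦ ?_⟩
  refine Set.disjoint_left.1 hw.1.2.2.2 ((hg w.1).1.mem_uIoo (w := g⁻¹ • c) hw.2 ?_) (hM g⁻¹ c hcM)
  rwa [smul_inv_smul]

variable (Γ) in
/-- The graph on the small gaps of `M` that joins two gaps whenever a tame element of `Γ` maps one
onto the other. -/
def gapGraph (M : Set X) (ε : ℝ) : SimpleGraph (smallGaps M ε) where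
  Adj v w := v ≠ w ∧ ∃ g : Γ, IsTame X ε g ∧ g • (v : X × X) = w
  symm := ⟨fun _ _ ⟨hne, g, hg, hgv⟩ ↦ ⟨hne.symm, g⁻¹, hg.inv, inv_smul_eq_iff.2 hgv.symm⟩⟩
  loopless := ⟨fun _ h ↦ h.1 rfl⟩

theorem gapGraph_adj {v w : smallGaps M ε} :
    (gapGraph Γ M ε).Adj v w ↔ v ≠ w ∧ ∃ g : Γ, IsTame X ε g ∧ g • (v : X × X) = w :=
  Iff.rfl

theorem exists_distortionLE_of_walk (hε : 0 ≤ ε) {u v : smallGaps M ε}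
    (p : (gapGraph Γ M ε).Walk u v) :
    ∃ g : Γ, DistortionLE (g • ·)
      (Real.exp (ε⁻¹ * (p.support.map fun w ↦ dist w.1.1 w.1.2).sum)) u.1 v.1 := by
  have one_le_exp (l : List (smallGaps M ε)) :
      1 ≤ Real.exp (ε⁻¹ * (l.map fun w ↦ dist w.1.1 w.1.2).sum) := by
    refine Real.one_le_exp (mul_nonneg (inv_nonneg.2 hε) (List.sum_nonneg fun a ha ↦ ?_))
    obtain ⟨w, -, rfl⟩ := List.mem_map.1 ha
    exact dist_nonneg
  induction p with
  | nil =>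
    refine ⟨1, fun y _ ↦ ?_⟩
    simp only [one_smul]
    exact le_mul_of_one_le_left (relDist_nonneg _ y) (one_le_exp _)
  | @cons u w v h p ih =>
    obtain ⟨-, s, hs, hsu⟩ := gapGraph_adj.1 h
    obtain ⟨g, hg⟩ := ih
    have hsw := (hs u.1.1).1.distortionLE u.2.2
    refine ⟨g * s, ?_⟩
    rw [SimpleGraph.Walk.support_cons, List.map_cons, List.sum_cons, mul_add, Real.exp_add,
      mul_comm]
    simp only [mul_smul]
    refine DistortionLE.comp (v := w.1) hg ?_ (Real.exp_pos _).le (one_le_exp _)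
    rw [← hsu]
    exact hsw

theorem exists_smul_closedBall_subset_of_reachable (hε : 0 ≤ ε)
    (hsum : Summable fun w : gaps M ↦ dist w.1.1 w.1.2) (u : smallGaps M ε) :
    ∃ δ > 0, ∀ v, (gapGraph Γ M ε).Reachable u v →
      ∃ g : Γ, g • Metric.closedBall u.1.1 δ ⊆ Metric.closedBall v.1.1 (dist v.1.1 v.1.2) := by
  classical
  let length : smallGaps M ε → ℝ := fun w ↦ dist w.1.1 w.1.2
  have hlength : Summable length :=
    hsum.comp_injective (i := inclusion (sep_subset _ _)) (inclusion_injective _)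
  let C := Real.exp (ε⁻¹ * ∑' w, length w)
  have hu : 0 < dist u.1.1 u.1.2 := dist_pos.2 u.2.1.2.2.1
  refine ⟨dist u.1.1 u.1.2 / C, div_pos hu (Real.exp_pos _), fun v ⟨p⟩ ↦ ?_⟩
  -- A path, unlike a walk, visits each gap at most once, so the lengths along it are summable.
  obtain ⟨q, hq⟩ := p.toPath
  have hqC : Real.exp (ε⁻¹ * (q.support.map length).sum) ≤ C := by
    refine Real.exp_le_exp.2 (mul_le_mul_of_nonneg_left ?_ (inv_nonneg.2 hε))
    rw [← List.sum_toFinset _ hq.support_nodup]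
    exact hlength.sum_le_tsum _ fun _ _ ↦ dist_nonneg
  obtain ⟨g, hg⟩ := exists_distortionLE_of_walk hε q
  refine ⟨g, ?_⟩
  rintro _ ⟨y, hy, rfl⟩
  have hy' : Real.exp (ε⁻¹ * (q.support.map length).sum) * relDist u.1 y ≤ 1 := by
    refine (mul_le_mul_of_nonneg_right hqC (relDist_nonneg _ y)).trans ?_
    rw [mul_comm, relDist, div_mul_eq_mul_div, div_le_one hu]
    exact (le_div_iff₀ (Real.exp_pos _)).1 hy
  exact (div_le_one (dist_pos.2 v.2.1.2.2.1)).1 ((hg y hy').trans hy')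

theorem finite_gaps_diff_smallGaps (hε : 0 < ε)
    (hsum : Summable fun w : gaps M ↦ dist w.1.1 w.1.2) : (gaps M \ smallGaps M ε).Finite := by
  have hlarge : {w : gaps M | ¬dist w.1.1 w.1.2 < ε}.Finite :=
    hsum.tendsto_cofinite_zero.eventually_lt_const hε
  refine (hlarge.image Subtype.val).subset fun w hw ↦ ⟨⟨w, hw.1⟩, fun h ↦ hw.2 ⟨hw.1, h⟩, rfl⟩

theorem exists_reachable_smul_mem_diff_smallGaps (hM : ∀ g : Γ, ∀ x ∈ M, g • x ∈ M) {S : Set Γ}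
    (hS : Subgroup.closure S = ⊤) (htame : ∀ s ∈ S, IsTame X ε s) {u : smallGaps M ε}
    (horb : (orbit Γ u.1.1).Infinite) (hfin : {v | (gapGraph Γ M ε).Reachable u v}.Finite) :
    ∃ v, (gapGraph Γ M ε).Reachable v u ∧ ∃ s ∈ S, s • v.1 ∈ gaps M \ smallGaps M ε := by
  by_contra! hsmall
  let A : Set (X × X) := Subtype.val '' {v | (gapGraph Γ M ε).Reachable u v}
  have hSA : ∀ s ∈ S, s • A ⊆ A := by
    rintro s hs _ ⟨_, ⟨v, huv, rfl⟩, rfl⟩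
    have hsv : s • v.1 ∈ smallGaps M ε := by
      by_contra h
      exact hsmall v huv.symm s hs ⟨smul_mem_gaps hM (htame s hs) v.2, h⟩
    refine ⟨⟨s • v.1, hsv⟩, ?_, rfl⟩
    obtain heq | hne := eq_or_ne v ⟨s • v.1, hsv⟩
    · rwa [← heq]
    · exact huv.trans (gapGraph_adj.2 ⟨hne, s, htame s hs, rfl⟩).reachable
  have hA : orbit Γ u.1 ⊆ A :=
    orbit_subset_of_smul_subset hS (hfin.image _) hSA ⟨u, .refl u, rfl⟩
  refine horb ((((hfin.image _).subset hA).image Prod.fst).subset ?_)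
  rintro _ ⟨g, rfl⟩
  exact ⟨g • u.1, mem_orbit _ g, rfl⟩

theorem exists_infinite_setOf_reachable (hM : ∀ g : Γ, ∀ x ∈ M, g • x ∈ M)
    (horb : ∀ x ∈ M, (orbit Γ x).Infinite) (hsum : Summable fun w : gaps M ↦ dist w.1.1 w.1.2)
    (hinf : (gaps M).Infinite) {S : Set Γ} (hSfin : S.Finite) (hS : Subgroup.closure S = ⊤)
    (hε : 0 < ε) (htame : ∀ s ∈ S, IsTame X ε s) :
    ∃ u, {v | (gapGraph Γ M ε).Reachable u v}.Infinite := by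
  by_contra! hfin
  let exits : Set (smallGaps M ε) := {v | ∃ s ∈ S, s • v.1 ∈ gaps M \ smallGaps M ε}
  have hexits : exits.Finite := by
    have hpre : (⋃ s ∈ S, (s • ·.1) ⁻¹' (gaps M \ smallGaps M ε) : Set (smallGaps M ε)).Finite :=
      hSfin.biUnion fun s _ ↦ (finite_gaps_diff_smallGaps hε hsum).preimage
        ((MulAction.injective s).comp Subtype.val_injective).injOn
    exact hpre.subset fun v ⟨s, hs, hsv⟩ ↦ mem_biUnion hs hsv
  have huniv : (univ : Set (smallGaps M ε)).Finite := by
    refine (hexits.biUnion fun v _ ↦ hfin v).subset fun u _ ↦ ?_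
    obtain ⟨v, hvu, hv⟩ :=
      exists_reachable_smul_mem_diff_smallGaps hM hS htame (horb _ u.2.1.1) (hfin u)
    exact mem_biUnion hv hvu
  have hsmall : (smallGaps M ε).Finite := finite_univ_iff.1 huniv
  exact hinf ((finite_gaps_diff_smallGaps hε hsum).of_sdiff hsmall)

theorem exists_closedBall_subset_ball_of_infinite (hM : IsCompact M)
    (hsum : Summable fun w : gaps M ↦ dist w.1.1 w.1.2) {𝒱 : Set (X × X)} (h𝒱 : 𝒱 ⊆ gaps M)
    (hinf : 𝒱.Infinite) :
    ∃ p ∈ M, ∀ ρ > 0, ∃ v ∈ 𝒱, Metric.closedBall v.1 (dist v.1 v.2) ⊆ Metric.ball p ρ := by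
  have : (cofinite ⊓ 𝓟 𝒱).NeBot := hinf.cofinite_inf_principal_neBot
  have hmem : ∀ᶠ v in cofinite ⊓ 𝓟 𝒱, v ∈ 𝒱 := eventually_inf_principal.2 (.of_forall fun _ ↦ id)
  obtain ⟨p, hpM, hp⟩ := hM.exists_mapClusterPt (f := cofinite ⊓ 𝓟 𝒱) (u := Prod.fst)
    (tendsto_principal.2 (hmem.mono fun v hv ↦ (h𝒱 hv).1))
  refine ⟨p, hpM, fun ρ hρ ↦ ?_⟩
  have hshort : ∀ᶠ v in cofinite ⊓ 𝓟 𝒱, dist v.1 v.2 < ρ / 2 := by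
    filter_upwards [hmem, ((finite_gaps_diff_smallGaps (half_pos hρ)
      hsum).eventually_cofinite_notMem).filter_mono inf_le_left] with v hv hlarge
    exact not_not.1 fun h ↦ hlarge ⟨h𝒱 hv, fun h' ↦ h h'.2⟩
  have hnear := mapClusterPt_iff_frequently.1 hp _ (Metric.ball_mem_nhds p (half_pos hρ))
  obtain ⟨v, hvp, hvρ, hv⟩ := (hnear.and_eventually (hshort.and hmem)).exists
  refine ⟨v, hv, Metric.closedBall_subset_ball' ?_⟩
  exact (add_lt_add hvρ hvp).trans_eq (add_halves ρ)

end GapGraph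

section Contraction

variable {Γ X : Type*} [Group Γ] [MetricSpace X] [MulAction Γ X] {M : Set X}

theorem IsMinimalSet.exists_smul_subset_ball [ContinuousConstSMul Γ X] (hM : IsMinimalSet Γ M)
    {B : Set X} {p x : X} (hp : p ∈ M) (hx : x ∈ M)
    (hB : ∀ ρ > 0, ∃ g : Γ, g • B ⊆ Metric.ball p ρ) {η : ℝ} (hη : 0 < η) :
    ∃ g : Γ, g • B ⊆ Metric.ball x η := by
  have hdense : x ∈ closure (orbit Γ p) := (hM.2 p hp).ge hx
  obtain ⟨_, hh, h, rfl⟩ := mem_closure_iff_nhds.1 hdense _ (Metric.ball_mem_nhds x hη)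
  obtain ⟨ρ, hρ, hρh⟩ := Metric.mem_nhds_iff.1 <|
    (continuous_const_smul h).continuousAt.preimage_mem_nhds (Metric.isOpen_ball.mem_nhds hh)
  obtain ⟨g, hg⟩ := hB ρ hρ
  refine ⟨h * g, ?_⟩
  rw [mul_smul]
  exact (smul_set_mono (hg.trans hρh)).trans (image_preimage_subset _ _)

theorem not_isMulTorsion_of_smul_closedBall_subset_ball {x : X} [(𝓝[≠] x).NeBot] {δ : ℝ}
    (hδ : 0 < δ) (hcontr : ∀ η > 0, ∃ g : Γ, g • Metric.closedBall x δ ⊆ Metric.ball x η) :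
    ¬IsMulTorsion Γ := by
  intro htors
  have hnear : ∀ᶠ y in 𝓝[≠] x, y ∈ Metric.closedBall x δ :=
    nhdsWithin_le_nhds (Metric.closedBall_mem_nhds x hδ)
  obtain ⟨y, hyδ, hyx⟩ := (hnear.and eventually_mem_nhdsWithin).exists
  obtain ⟨g, hg⟩ := hcontr _ (dist_pos.2 hyx)
  have hball : Metric.ball x (dist y x) ⊆ Metric.closedBall x δ :=
    (Metric.ball_subset_ball hyδ).trans Metric.ball_subset_closedBall
  exact (Metric.mem_ball.1 (subset_of_smul_subset_of_isOfFinOrder (htors g) hball hg hyδ)).false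

variable [LinearOrder X] [CompactSpace X] [ContinuousConstSMul Γ X]

theorem IsMinimalSet.exists_smul_closedBall_subset_ball (hM : IsMinimalSet Γ M)
    (hsum : Summable fun w : gaps M ↦ dist w.1.1 w.1.2) (hinf : (gaps M).Infinite)
    (horb : ∀ x ∈ M, (orbit Γ x).Infinite) {S : Set Γ} (hSfin : S.Finite)
    (hS : Subgroup.closure S = ⊤) {ε : ℝ} (hε : 0 < ε) (htame : ∀ s ∈ S, IsTame X ε s) :
    ∃ x ∈ M, ∃ δ > 0, ∀ η > 0, ∃ g : Γ, g • Metric.closedBall x δ ⊆ Metric.ball x η := by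
  obtain ⟨u, hu⟩ := exists_infinite_setOf_reachable (fun g x ↦ hM.smul_mem g) horb hsum hinf
    hSfin hS hε htame
  obtain ⟨δ, hδ, hδu⟩ := exists_smul_closedBall_subset_of_reachable (Γ := Γ) hε.le hsum u
  obtain ⟨p, hpM, hp⟩ := exists_closedBall_subset_ball_of_infinite hM.isClosed.isCompact hsum
    (image_subset_iff.2 fun v _ ↦ v.2.1) (hu.image Subtype.val_injective.injOn)
  refine ⟨u.1.1, u.2.1.1, δ, hδ, fun η hη ↦
    hM.exists_smul_subset_ball hpM u.2.1.1 (fun ρ hρ ↦ ?_) hη⟩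
  obtain ⟨_, ⟨v, huv, rfl⟩, hv⟩ := hp ρ hρ
  exact (hδu v huv).imp fun g hg ↦ hg.trans hv

end Contraction

section FiniteOrbits

variable {Γ : Type*} [Group Γ] [Group.FG Γ]

theorem exists_finite_generating_isTame {X : Type*} [MetricSpace X] [LinearOrder X]
    [MulAction Γ X]
    (htame : ∀ g : Γ, ∀ᶠ ε in 𝓝[>] (0 : ℝ), ∀ p : X, TameAt (g • ·) ε p) :
    ∃ S : Set Γ, S.Finite ∧ Subgroup.closure S = ⊤ ∧ ∃ ε > 0, ∀ s ∈ S, IsTame X ε s := by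
  obtain ⟨S, hS, hSfin⟩ := Group.fg_iff.1 ‹Group.FG Γ›
  have htameS : ∀ᶠ ε in 𝓝[>] (0 : ℝ), ∀ s ∈ S, IsTame X ε s :=
    (eventually_all_finite hSfin).2 fun s _ ↦ (htame s).and (htame s⁻¹) |>.mono fun ε h p ↦
      ⟨h.1 p, h.2 p⟩
  exact ⟨S, hSfin, hS, (eventually_mem_nhdsWithin.and htameS).exists⟩

theorem isOpen_setOf_finite_orbit {X : Type*} [LinearOrder X] [TopologicalSpace X] [T2Space X]
    [CompactSpace X] [TotallyDisconnectedSpace X] [MulAction Γ X] [ContinuousConstSMul Γ X]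
    (htors : IsMulTorsion Γ) (hmono : ∀ (g : Γ) (x : X), StrictMonotoneNear (g • ·) x) :
    IsOpen {x : X | (orbit Γ x).Finite} := by
  refine isOpen_iff_mem_nhds.2 fun x hx ↦ ?_
  obtain ⟨U, hU, hxU, -, _⟩ :=
    exists_isClopen_fixingSubgroup_finiteIndex_of_finite_orbit htors (hmono · x) hx
  exact mem_of_superset (hU.2.mem_nhds hxU) fun y hy ↦ finite_orbit_of_mem hy

theorem finite_orbit_of_isMulTorsion {K : Set ℝ} (hcomp : IsCompact K)
    (hdisc : IsTotallyDisconnected K) [MulAction Γ K] [ContinuousConstSMul Γ K]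
    (htors : IsMulTorsion Γ) (hmono : ∀ (g : Γ) (x : K), StrictMonotoneNear (g • ·) x)
    (htame : ∀ g : Γ, ∀ᶠ ε in 𝓝[>] (0 : ℝ), ∀ p : K, TameAt (g • ·) ε p) (x : K) :
    (orbit Γ x).Finite := by
  have : CompactSpace K := isCompact_iff_compactSpace.1 hcomp
  have : TotallyDisconnectedSpace K := totallyDisconnectedSpace_subtype_iff.2 hdisc
  by_contra hx
  obtain ⟨M, hMinf, hM⟩ := exists_isMinimalSet_subset (Γ := Γ)
    (isOpen_setOf_finite_orbit htors hmono).isClosed_compl ⟨x, hx⟩ fun g y hy ↦ by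
      rwa [mem_compl_iff, mem_ofPred_eq, orbit_eq_iff.2 (mem_orbit y g)]
  obtain ⟨y, hyM⟩ := hM.1
  have hinf : M.Infinite := Infinite.mono (hM.orbit_subset hyM) (hMinf hyM)
  obtain ⟨S, hSfin, hS, ε, hε, hSε⟩ := exists_finite_generating_isTame htame
  obtain ⟨u, huM, δ, hδ, hcontr⟩ := hM.exists_smul_closedBall_subset_ball
    (summable_dist_gaps hcomp) (infinite_gaps hdisc hM.isClosed.isCompact hinf)
    (fun z hz ↦ hMinf hz) hSfin hS hε hSε
  have : (𝓝[≠] u).NeBot := NeBot.mono (hM.accPt hinf huM) inf_le_left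
  exact not_isMulTorsion_of_smul_closedBall_subset_ball hδ hcontr htors

end FiniteOrbits

theorem finite_image_domRestrict_apK {K : Set ℝ} {G : Subgroup (Equiv.Perm K)} (U : Set K)
    [(fixingSubgroup G U).FiniteIndex] :
    ((fun g ↦ (Subtype.val '' U).domRestrict (apK K g)) '' (G : Set (Equiv.Perm K))).Finite := by
  rw [image_eq_range (fun g ↦ (Subtype.val '' U).domRestrict (apK K g))]
  refine finite_range_of_mul_right_invariant (fixingSubgroup G U) fun g h hh ↦ ?_
  funext ⟨_, y, hy, rfl⟩
  have hhy : (h : Equiv.Perm K) y = y := (mem_fixingSubgroup_iff G).1 hh y hy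
  simp only [domRestrict_apply, apK_coe, Subgroup.coe_mul, Equiv.Perm.mul_apply, hhy]

theorem invariant_clopen_neighbourhood_general (K : Set ℝ) (hcomp : IsCompact K)
    (hdisc : IsTotallyDisconnected K) (G : Subgroup (Equiv.Perm K))
    (hdiff : ∀ g ∈ G, MemDiffLip K g)
    (hFG : G.FG)
    (hper : ∀ g ∈ G, IsOfFinOrder g) :
    ∀ x ∈ K, ∃ U : Set ℝ, U ⊆ K ∧ x ∈ U ∧
      IsClosed U ∧ (∃ V : Set ℝ, IsOpen V ∧ U = V ∩ K) ∧
      (∀ g ∈ G, ∀ y ∈ U, apK K g y ∈ U) ∧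
      ((fun g : Equiv.Perm K => U.domRestrict (apK K g)) '' (G : Set (Equiv.Perm K))).Finite := by
  have : CompactSpace K := isCompact_iff_compactSpace.1 hcomp
  have : TotallyDisconnectedSpace K := totallyDisconnectedSpace_subtype_iff.2 hdisc
  have : Group.FG G := (Group.fg_iff_subgroup_fg G).2 hFG
  have : ContinuousConstSMul G K := ⟨fun g ↦ (hdiff g g.2).1⟩
  have htors : IsMulTorsion G := fun g ↦ Submonoid.isOfFinOrder_coe.1 (hper g g.2)
  have hmono (g : G) (x : K) : StrictMonotoneNear (g • ·) x :=
    (hdiff g g.2).2.2.strictMonotoneNear x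
  have hfin := finite_orbit_of_isMulTorsion hcomp hdisc htors hmono
    fun g ↦ (hdiff g g.2).eventually_tameAt
  intro x hx
  obtain ⟨U, hU, hxU, hinv, _⟩ :=
    exists_isClopen_fixingSubgroup_finiteIndex_of_finite_orbit htors (hmono · ⟨x, hx⟩) (hfin _)
  refine ⟨(↑) '' U, Subtype.coe_image_subset K U, ⟨_, hxU, rfl⟩,
    (hU.1.isCompact.image continuous_subtype_val).isClosed, ?_, ?_, finite_image_domRestrict_apK U⟩
  · obtain ⟨V, hV, rfl⟩ := isOpen_induced_iff.1 hU.2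
    exact ⟨V, hV, by rw [Subtype.image_preimage_coe, inter_comm]⟩
  · rintro g hg _ ⟨y, hy, rfl⟩
    exact ⟨g y, hinv ⟨g, hg⟩ y hy, (apK_coe g y).symm⟩

/-- For a finitely generated periodic subgroup `G` of
`diff^{1+Lip}(K)`, every point of `K` has a `G`-invariant clopen neighbourhood
in `K` on which the group of restrictions of elements of `G` is finite. -/
theorem invariant_clopen_neighbourhood (K : Set ℝ) (hK : IsCantorInR K)
    (G : Subgroup (Equiv.Perm K))
    (hdiff : ∀ g ∈ G, MemDiffLip K g)
    (hFG : G.FG)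
    (hper : ∀ g ∈ G, IsOfFinOrder g) :
    ∀ x ∈ K, ∃ U : Set ℝ, U ⊆ K ∧ x ∈ U ∧
      IsClosed U ∧ (∃ V : Set ℝ, IsOpen V ∧ U = V ∩ K) ∧
      (∀ g ∈ G, ∀ y ∈ U, apK K g y ∈ U) ∧
      ((fun g : Equiv.Perm K => U.restrict (apK K g)) '' (G : Set (Equiv.Perm K))).Finite :=
  invariant_clopen_neighbourhood_general K hK.2.1 hK.2.2.1 G hdiff hFG hper
end
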